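/- For integers t > s ≥ 2, let f_{s,t}(n) denote the maximum integer m such that every n-vertex K_t-free graph contains a K_s-free induced subgraph on m vertices. Then for every integer s ≥ 3 there exists n₀ such that for all n ≥ n₀, f_{s,s+1}(n) ≤ 2^{100s}·√n·log n. -/

import Mathlib

/-!
The upper bound comes from a random graph. Give every vertex, for each of `b` slopes, a uniformly
random line (one of `N` parallel ones) and a uniformly random colour (one of `s`). Two vertices are
adjacent when they share a line at exactly one slope `i`, have different colours there, and are not
joined by a path of two collinearities through a third vertex at two distinct slopes earlier
than `i` (a *conflict*). In a triangle of this graph whose edges do not all have the same slope, the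
three slopes are distinct and the last edge has a conflict, so triangles, and hence cliques, live
on a single line; the colours then bound cliques by `s` vertices (`graph_cliqueFree`).

Fix a set `W` of `t = 2sw` vertices. If no line carries more than `M` vertices and the vertices
incident to many members of any given family of lines are few, then `W` spans few conflicts, so at
every slope at least half of `W` has few conflicts inside `W` (`card_conflict_pairs_le`,
`lowDeg_of_sum`). The conflict relation at slope `i` depends only on the earlier slopes, and so
given those the labels at slope `i` are still uniform. A greedy search on each line for `s`
vertices of the `s` colours without conflicts then succeeds on a positive proportion of the lines,
outside an event of probability at most `p` (`card_few_good_le`). Exposing the slopes one at a time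
shows that at least `h` slopes are bad for `W` with probability at most `2 ^ b * p ^ h`
(`card_many_bad_le`), which beats the number of choices of `W`. At the other slopes `W` contains
many rainbow conflict-free `s`-sets, one on each good line. If `W` has no `K_s`, each of them
contains two vertices collinear at a second slope as well, and there are too few such pairs
(`card_not_bad_mul_le`, `bad_point_count`). So some outcome gives a `K_{s+1}`-free graph in which
every `t`-set contains a `K_s` (`exists_conf`).

With `X = 2 ^ s`, `l ≈ log n` and `R ≈ √n / l`, the parameters are `u = X ^ 40 * R * l ^ 2`,
`N = 2su` lines per slope, `b = 2 * X ^ 11 * l` slopes and `t = 4 s ^ 3 X ^ 6 u`, which is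
`O_s(√n * log n)` (`main_bound`). Probabilities are handled as cardinalities of sets of
configurations divided by the number of all configurations.
-/

/-- The Erdős–Rogers function `f_{s,t}(n)`: the maximum `m` such that every `n`-vertex
`K_t`-free graph contains a `K_s`-free induced subgraph on `m` vertices. -/
noncomputable def erdosRogers (s t n : ℕ) : ℕ :=
  sSup {m : ℕ | ∀ G : SimpleGraph (Fin n), G.CliqueFree t →
    ∃ A : Finset (Fin n), A.card = m ∧ (G.induce (↑A : Set (Fin n))).CliqueFree s}

namespace ER

section

open Finset
open scoped Classical

/-! ### The random graph -/

/-- The vertices `x` and `y` are joined through some `z` by collinearities at two distinct slopes,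
both earlier than `i`. Here and below a configuration `ω` assigns to each slope and vertex a pair
(line, colour). -/
def Conflict {V : Type*} {b N s : ℕ} (ω : Fin b → V → Fin N × Fin s) (i : Fin b) (x y : V) :
    Prop :=
  ∃ z : V, ∃ j k : Fin b, j < i ∧ k < i ∧ j ≠ k ∧
    (ω j x).1 = (ω j z).1 ∧ (ω k z).1 = (ω k y).1

/-- The vertices `x` and `y` span an edge of slope `i`: they share a line at slope `i` and at no
other slope, have different colours at slope `i`, and are in no conflict. -/
def EdgeAt {V : Type*} {b N s : ℕ} (ω : Fin b → V → Fin N × Fin s) (i : Fin b) (x y : V) :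
    Prop :=
  (ω i x).1 = (ω i y).1 ∧ (ω i x).2 ≠ (ω i y).2 ∧
    (∀ j, j ≠ i → (ω j x).1 ≠ (ω j y).1) ∧ ¬ Conflict ω i x y

lemma Conflict.symm {V : Type*} {b N s : ℕ} {ω : Fin b → V → Fin N × Fin s} {i : Fin b}
    {x y : V} (h : Conflict ω i x y) : Conflict ω i y x := by
  obtain ⟨z, j, k, hj, hk, hjk, h1, h2⟩ := h
  exact ⟨z, k, j, hk, hj, hjk.symm, h2.symm, h1.symm⟩

lemma EdgeAt.symm {V : Type*} {b N s : ℕ} {ω : Fin b → V → Fin N × Fin s} {i : Fin b}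
    {x y : V} (h : EdgeAt ω i x y) : EdgeAt ω i y x :=
  ⟨h.1.symm, h.2.1.symm, fun j hj => (h.2.2.1 j hj).symm, fun hc => h.2.2.2 hc.symm⟩

/-- The graph of all pairs that span an edge of some slope. -/
def graph {V : Type*} {b N s : ℕ} (ω : Fin b → V → Fin N × Fin s) : SimpleGraph V where
  Adj x y := ∃ i, EdgeAt ω i x y
  symm := ⟨fun _ _ ⟨i, h⟩ => ⟨i, h.symm⟩⟩
  loopless := ⟨fun _ ⟨_, h⟩ => h.2.1 rfl⟩

/-- The three edges of a triangle have the same slope. If just two of the slopes agreed, the ends of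
the third edge would share a line at a second slope; if all are distinct, the edge of the largest
slope has a conflict through the opposite vertex. -/
lemma triangle_slope {V : Type*} {b N s : ℕ} {ω : Fin b → V → Fin N × Fin s} {i j k : Fin b}
    {x y z : V} (hxy : EdgeAt ω i x y) (hyz : EdgeAt ω j y z) (hxz : EdgeAt ω k x z) :
    j = i ∧ k = i := by
  by_cases hij : i = j
  · subst hij
    refine ⟨rfl, ?_⟩
    by_contra hk
    exact hxz.2.2.1 i (Ne.symm hk) (hxy.1.trans hyz.1)
  by_cases hik : i = k
  · subst hik
    exact absurd (hxy.1.symm.trans hxz.1) (hyz.2.2.1 i hij)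
  by_cases hjk : j = k
  · subst hjk
    exact absurd (hxz.1.trans hyz.1.symm) (hxy.2.2.1 j (Ne.symm hij))
  exfalso
  rcases lt_or_gt_of_ne hij with h1 | h1
  · rcases lt_or_gt_of_ne hjk with h2 | h2
    · exact hxz.2.2.2 ⟨y, i, j, h1.trans h2, h2, hij, hxy.1, hyz.1⟩
    · exact hyz.2.2.2 ⟨x, i, k, h1, h2, hik, hxy.1.symm, hxz.1⟩
  · rcases lt_or_gt_of_ne hik with h2 | h2
    · exact hxz.2.2.2 ⟨y, i, j, h2, h1.trans h2, hij, hxy.1, hyz.1⟩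
    · exact hxy.2.2.2 ⟨z, k, j, h2, h1, Ne.symm hjk, hxz.1, hyz.1.symm⟩

lemma graph_cliqueFree {V : Type*} {b N s : ℕ} (hs : 2 ≤ s) (ω : Fin b → V → Fin N × Fin s) :
    (graph ω).CliqueFree (s + 1) := by
  intro S hS
  have hcl := hS.isClique
  have hadj : ∀ x ∈ S, ∀ y ∈ S, x ≠ y → ∃ i, EdgeAt ω i x y := fun x hx y hy hxy => hcl hx hy hxy
  obtain ⟨x0, hx0, x1, hx1, h01⟩ := Finset.one_lt_card.1 (by rw [hS.card_eq]; omega)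
  obtain ⟨i, hi⟩ := hadj x0 hx0 x1 hx1 h01
  have h0 : ∀ y ∈ S, y ≠ x0 → EdgeAt ω i x0 y := by
    intro y hy hy0
    by_cases hy1 : x1 = y
    · exact hy1 ▸ hi
    obtain ⟨j, hj⟩ := hadj x1 hx1 y hy hy1
    obtain ⟨k, hk⟩ := hadj x0 hx0 y hy hy0.symm
    exact (triangle_slope hi hj hk).2 ▸ hk
  have hall : ∀ x ∈ S, ∀ y ∈ S, x ≠ y → EdgeAt ω i x y := by
    intro x hx y hy hxy
    by_cases hx' : x = x0
    · exact hx' ▸ h0 y hy (hx' ▸ hxy.symm)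
    by_cases hy' : y = x0
    · exact hy' ▸ (h0 x hx hx').symm
    obtain ⟨j, hj⟩ := hadj x hx y hy hxy
    exact (triangle_slope (h0 x hx hx') hj (h0 y hy hy')).1 ▸ hj
  have hinj : Set.InjOn (fun x => (ω i x).2) (S : Set V) := by
    intro x hx y hy h
    by_contra hxy
    exact (hall x hx y hy hxy).2.1 h
  have := Finset.card_le_card_of_injOn (s := S) (t := (univ : Finset (Fin s)))
    (fun x => (ω i x).2) (fun _ _ => mem_coe.2 (mem_univ _)) hinj
  rw [hS.card_eq, card_univ, Fintype.card_fin] at this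
  omega

/-! ### Counting conflicts in a set -/

/-- A weight `m ≤ M` of total mass at most `M * r` is best concentrated on the `r` largest values
of `v`. -/
lemma exists_top {N : ℕ} (m v : Fin N → ℕ) (M r : ℕ) (hr : r ≤ N) (hm : ∀ a, m a ≤ M)
    (hsum : ∑ a, m a ≤ M * r) :
    ∃ A : Finset (Fin N), A.card = r ∧ ∑ a, m a * v a ≤ M * ∑ a ∈ A, v a := by
  have hne : (powersetCard r (univ : Finset (Fin N))).Nonempty := by
    rw [powersetCard_nonempty]; simpa using hr
  obtain ⟨A, hA, hmax⟩ := exists_max_image _ (fun A => ∑ a ∈ A, v a) hne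
  rw [mem_powersetCard] at hA
  refine ⟨A, hA.2, ?_⟩
  rcases Nat.eq_zero_or_pos r with h0 | hpos
  · have : ∀ a, m a = 0 := by
      subst h0
      simpa using hsum
    simp [this]
  have hAne : A.Nonempty := by rw [← card_pos]; omega
  obtain ⟨c, hc, hmin⟩ := exists_min_image A v hAne
  have hout : ∀ d ∉ A, v d ≤ v c := by
    intro d hd
    have hd' : d ∉ A.erase c := fun h => hd (mem_of_mem_erase h)
    have hB : insert d (A.erase c) ∈ powersetCard r (univ : Finset (Fin N)) := by
      rw [mem_powersetCard]
      refine ⟨subset_univ _, ?_⟩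
      rw [card_insert_of_notMem hd', card_erase_of_mem hc]
      omega
    have h1 := hmax _ hB
    rw [sum_insert hd'] at h1
    have h2 := add_sum_erase A v hc
    omega
  have hsplit : ∀ f : Fin N → ℕ, ∑ a, f a = ∑ a ∈ A, f a + ∑ a ∈ Aᶜ, f a := fun f =>
    (sum_add_sum_compl A f).symm
  have e1 : ∑ a ∈ Aᶜ, m a * v a ≤ (∑ a ∈ Aᶜ, m a) * v c := by
    rw [sum_mul]
    exact sum_le_sum fun a ha => Nat.mul_le_mul_left _ (hout a (mem_compl.1 ha))
  have e2 : ∑ a ∈ A, (m a * v a + M * v c) ≤ ∑ a ∈ A, (M * v a + m a * v c) := by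
    refine sum_le_sum fun a ha => ?_
    have h1 := hmin a ha
    have h2 := hm a
    zify at h1 h2 ⊢
    nlinarith
  rw [sum_add_distrib, sum_add_distrib, sum_const, ← mul_sum, ← sum_mul, hA.2, smul_eq_mul] at e2
  rw [hsplit] at hsum ⊢
  have e3 := Nat.mul_le_mul_right (v c) hsum
  rw [add_mul] at e3
  have e4 : M * r * v c = r * (M * v c) := by ring
  omega

/-- The bound of `exists_top`, applied at every slope simultaneously. -/
lemma exists_top_family {V : Type*} [Fintype V] {b N : ℕ} (L : Fin b → V → Fin N)
    (m : Fin b → Fin N → ℕ) (h : Fin b → V → ℕ) (M r : ℕ) (hr : r ≤ N)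
    (hm : ∀ j a, m j a ≤ M) (hsum : ∀ j, ∑ a, m j a ≤ M * r) :
    ∃ A : Fin b → Finset (Fin N), (∀ j, (A j).card = r) ∧
      ∑ z, ∑ j, m j (L j z) * h j z ≤ M * ∑ z, ∑ j, (if L j z ∈ A j then 1 else 0) * h j z := by
  choose A hA1 hA2 using fun j =>
    exists_top (m j) (fun a => ∑ z, if L j z = a then h j z else 0) M r hr (hm j) (hsum j)
  refine ⟨A, hA1, ?_⟩
  rw [sum_comm, sum_comm (s := (univ : Finset V)), mul_sum]
  refine sum_le_sum fun j _ => ?_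
  have e1 : ∑ z, m j (L j z) * h j z = ∑ a, m j a * ∑ z, if L j z = a then h j z else 0 := by
    simp only [mul_sum, mul_ite, mul_zero]
    rw [sum_comm]
    simp
  have e2 : ∑ z, (if L j z ∈ A j then 1 else 0) * h j z =
      ∑ a ∈ A j, ∑ z, if L j z = a then h j z else 0 := by
    rw [sum_comm]
    simp
  rw [e1, e2]
  exact hA2 j

/-- The number of slopes `j` for which the line through `z` belongs to the family `A j`. -/
def hits {V : Type*} {b N s : ℕ} (ω : Fin b → V → Fin N × Fin s) (A : Fin b → Finset (Fin N))
    (z : V) : ℕ :=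
  (univ.filter fun j => (ω j z).1 ∈ A j).card

lemma sum_pairs_le {b : ℕ} (P Q S : Fin b → Prop) [DecidablePred P]
    [DecidablePred Q] [DecidablePred S] (hP : ∀ j, P j → S j) (hQ : ∀ j, Q j → S j) :
    ∑ j, ∑ k, (if k ≠ j then (if P j then 1 else 0) * (if Q k then 1 else 0) else 0) ≤
      (univ.filter S).card * ((univ.filter S).card - 1) := by
  have h1 := offDiag_card (univ.filter S)
  rw [Nat.mul_sub, mul_one, ← h1, card_eq_sum_ones, ← sum_product']
  have h2 : (univ.filter S).offDiag =
      ((univ : Finset (Fin b)) ×ˢ univ).filter fun p => S p.1 ∧ S p.2 ∧ p.1 ≠ p.2 := by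
    ext p; simp
  rw [h2, sum_filter]
  refine sum_le_sum fun p _ => ?_
  have := hP p.1
  have := hQ p.2
  split_ifs <;> simp_all [eq_comm]

/-- The number of conflicts inside `W` is at most the sum over `z` and `j ≠ k` of `m_j(z) m_k(z)`,
where `m_j(z)` is the number of points of `W` on the line of slope `j` through `z`. By `exists_top`
each factor may be replaced by `M` times the indicator of a family of `r` lines per slope. -/
lemma card_conflict_pairs_le {V : Type*} [Fintype V] {b N s : ℕ}
    (ω : Fin b → V → Fin N × Fin s) (W : Finset V) (M r τ : ℕ) (hr : 2 * r ≤ N)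
    (hW : W.card = M * r)
    (h0 : ∀ j a, (univ.filter fun x => (ω j x).1 = a).card ≤ M)
    (h1 : ∀ A : Fin b → Finset (Fin N), (∀ j, (A j).card = 2 * r) →
      ∑ z, hits ω A z * (hits ω A z - 1) ≤ τ) (i : Fin b) :
    ∑ x ∈ W, (W.filter fun y => Conflict ω i x y).card ≤ M * M * τ := by
  set m : Fin b → Fin N → ℕ := fun j a => (W.filter fun x => (ω j x).1 = a).card with hm
  have hmM : ∀ j a, m j a ≤ M := fun j a =>
    (card_le_card (filter_subset_filter _ (subset_univ W))).trans (h0 j a)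
  have hmsum : ∀ j, ∑ a, m j a ≤ M * r := by
    intro j
    rw [← hW, card_eq_sum_card_fiberwise (f := fun x => (ω j x).1) (t := univ)
      (fun _ _ => mem_coe.2 (mem_univ _))]
  have step1 : ∑ x ∈ W, (W.filter fun y => Conflict ω i x y).card ≤
      ∑ z, ∑ j, m j (ω j z).1 * ∑ k, if k ≠ j then m k (ω k z).1 else 0 := by
    have : ∑ x ∈ W, (W.filter fun y => Conflict ω i x y).card =
        ((W ×ˢ W).filter fun p => Conflict ω i p.1 p.2).card := by
      rw [card_filter, sum_product]
      exact sum_congr rfl fun x _ => by rw [card_filter]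
    rw [this]
    have hsub : ((W ×ˢ W).filter fun p => Conflict ω i p.1 p.2) ⊆
        (univ : Finset V).biUnion fun z => (univ : Finset (Fin b)).biUnion fun j =>
          (univ.filter fun k => k ≠ j).biUnion fun k =>
          (W.filter fun x => (ω j x).1 = (ω j z).1) ×ˢ
            (W.filter fun x => (ω k x).1 = (ω k z).1) := by
      intro p hp
      simp only [mem_filter, mem_product] at hp
      obtain ⟨⟨hp1, hp2⟩, z, j, k, -, -, hjk, e1, e2⟩ := hp
      simp only [mem_biUnion, mem_univ, true_and, mem_filter, mem_product]
      exact ⟨z, j, k, hjk.symm, ⟨hp1, e1⟩, ⟨hp2, e2.symm⟩⟩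
    refine (card_le_card hsub).trans ?_
    refine card_biUnion_le.trans (sum_le_sum fun z _ => ?_)
    refine card_biUnion_le.trans (sum_le_sum fun j _ => ?_)
    refine card_biUnion_le.trans (le_of_eq ?_)
    rw [mul_sum, sum_filter]
    refine sum_congr rfl fun k _ => ?_
    rw [card_product]
    split_ifs <;> simp [hm]
  obtain ⟨A, hA, step2⟩ := exists_top_family (fun j z => (ω j z).1) m
    (fun j z => ∑ k, if k ≠ j then m k (ω k z).1 else 0) M r (by omega) hmM hmsum
  obtain ⟨A', hA', step3⟩ := exists_top_family (fun j z => (ω j z).1) m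
    (fun k z => ∑ j, if k ≠ j then (if (ω j z).1 ∈ A j then 1 else 0) else 0) M r (by omega)
      hmM hmsum
  have hC : ∀ j, ∃ C : Finset (Fin N), A j ∪ A' j ⊆ C ∧ C.card = 2 * r := by
    intro j
    refine exists_superset_card_eq ?_ (by simpa using hr)
    have := card_union_le (A j) (A' j)
    rw [hA, hA'] at this
    omega
  choose C hC1 hC2 using hC
  have step4 := h1 C hC2
  have swap : ∑ z, ∑ j, (if (ω j z).1 ∈ A j then 1 else 0) *
        (∑ k, if k ≠ j then m k (ω k z).1 else 0) =
      ∑ z, ∑ k, m k (ω k z).1 * ∑ j, if k ≠ j then (if (ω j z).1 ∈ A j then 1 else 0) else 0 := by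
    refine sum_congr rfl fun z _ => ?_
    simp_rw [mul_sum]
    rw [sum_comm]
    refine sum_congr rfl fun k _ => sum_congr rfl fun j _ => ?_
    split_ifs <;> simp
  have step5 : ∑ z, ∑ k, (if (ω k z).1 ∈ A' k then 1 else 0) *
      (∑ j, if k ≠ j then (if (ω j z).1 ∈ A j then 1 else 0) else 0) ≤
      ∑ z, hits ω C z * (hits ω C z - 1) := by
    refine sum_le_sum fun z _ => ?_
    refine le_trans (le_of_eq ?_) (sum_pairs_le (fun j => (ω j z).1 ∈ A' j)
      (fun j => (ω j z).1 ∈ A j) (fun j => (ω j z).1 ∈ C j)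
      (fun j h => hC1 j (mem_union_right _ h)) (fun j h => hC1 j (mem_union_left _ h)))
    refine sum_congr rfl fun k _ => ?_
    rw [mul_sum]
    refine sum_congr rfl fun j _ => ?_
    by_cases h : k = j
    · rw [if_neg (not_not.2 h), if_neg (not_not.2 h.symm), mul_zero]
    · rw [if_pos h, if_pos (Ne.symm h)]
  calc _ ≤ _ := step1
    _ ≤ _ := step2
    _ ≤ M * (M * τ) := by
      refine Nat.mul_le_mul_left _ ?_
      rw [swap]
      exact step3.trans (Nat.mul_le_mul_left _ (step5.trans step4))
    _ = _ := by ring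

/-- At least half of the points of `W` are related by `Γ` to at most `u / 2` points of `W`. -/
def LowDeg {V : Type*} (Γ : V → V → Prop) (W : Finset V) (u : ℕ) : Prop :=
  W.card ≤ 2 * (W.filter fun x => 2 * (W.filter fun y => Γ x y).card ≤ u).card

/-- Markov's inequality for the number of `Γ`-neighbours inside `W`. -/
lemma lowDeg_of_sum {V : Type*} (Γ : V → V → Prop) (W : Finset V) (u T : ℕ) (hu : 0 < u)
    (hT : ∑ x ∈ W, (W.filter fun y => Γ x y).card ≤ T) (hTu : 4 * T ≤ u * W.card) :
    LowDeg Γ W u := by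
  unfold LowDeg
  have hsplit := card_filter_add_card_filter_not (s := W)
    (fun x => 2 * (W.filter fun y => Γ x y).card ≤ u)
  set B := W.filter fun x => ¬ 2 * (W.filter fun y => Γ x y).card ≤ u with hB
  have h1 : B.card * u ≤ ∑ x ∈ W, 2 * (W.filter fun y => Γ x y).card := by
    calc B.card * u = ∑ x ∈ B, u := by simp
      _ ≤ ∑ x ∈ B, 2 * (W.filter fun y => Γ x y).card :=
        sum_le_sum fun x hx => by
          have := (mem_filter.1 hx).2
          omega
      _ ≤ _ := sum_le_sum_of_subset (filter_subset _ _)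
  rw [← mul_sum] at h1
  have h2 : (2 * B.card) * u ≤ W.card * u := by nlinarith
  have h3 := Nat.le_of_mul_le_mul_right h2 hu
  omega

/-! ### Exponential moments of independent trials -/

/-- The trials in `J` all succeed with probability at most `(ρ / |Λ|) ^ |J|`. -/
lemma card_forall_mem_le {Λ : Type*} [Fintype Λ] [DecidableEq Λ] [Nonempty Λ] {b : ℕ}
    (A : Fin b → Finset Λ)
    (ρ : ℝ) (hA : ∀ j, ((A j).card : ℝ) ≤ ρ) (J : Finset (Fin b)) :
    ((univ.filter fun v : Fin b → Λ => ∀ j ∈ J, v j ∈ A j).card : ℝ) ≤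
      (Fintype.card Λ : ℝ) ^ b * (ρ / Fintype.card Λ) ^ J.card := by
  have hD : (0 : ℝ) < Fintype.card Λ := by exact_mod_cast Fintype.card_pos
  have h1 : (univ.filter fun v : Fin b → Λ => ∀ j ∈ J, v j ∈ A j) =
      Fintype.piFinset fun j => if j ∈ J then A j else univ := by
    ext v
    simp only [mem_filter, mem_univ, true_and, Fintype.mem_piFinset]
    refine forall_congr' fun j => ?_
    by_cases h : j ∈ J <;> simp [h]
  rw [h1, Fintype.card_piFinset]
  push_cast
  calc ∏ j, ((if j ∈ J then A j else univ).card : ℝ)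
      ≤ ∏ j, (Fintype.card Λ : ℝ) * (if j ∈ J then ρ / Fintype.card Λ else 1) := by
        refine prod_le_prod (fun _ _ => by positivity) fun j _ => ?_
        by_cases h : j ∈ J
        · simp only [h, if_true]
          rw [mul_div_cancel₀ _ hD.ne']
          exact hA j
        · simp [h]
    _ = _ := by
        rw [prod_mul_distrib, prod_const, prod_ite_mem, prod_const]
        simp

/-- If the number of successes `X` of `b` independent trials has small success probabilities,
then `E f(X)` exceeds `1` only by a second order term when `f 0, f 1 ≤ 1`. -/
lemma sum_mgf_le {Λ : Type*} [Fintype Λ] [DecidableEq Λ] [Nonempty Λ] {b : ℕ} (A : Fin b → Finset Λ)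
    (ρ F G η : ℝ) (hA : ∀ j, ((A j).card : ℝ) ≤ ρ) (f : ℕ → ℝ) (hf0 : f 0 ≤ 1) (hf1 : f 1 ≤ 1)
    (hf : ∀ u, 0 ≤ f u) (hF : 0 ≤ F) (hG : 0 ≤ G) (hρ : 0 ≤ ρ)
    (hfu : ∀ u, 2 ≤ u → u ≤ b → f u ≤ F * G ^ (u - 2))
    (hη : η = b * (ρ / Fintype.card Λ)) (hηG : η * G ≤ 1 / 2) :
    ∑ v : Fin b → Λ, f (univ.filter fun j => v j ∈ A j).card ≤
      (Fintype.card Λ : ℝ) ^ b * (1 + 2 * F * η ^ 2) := by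
  have hD : (0 : ℝ) < Fintype.card Λ := by exact_mod_cast Fintype.card_pos
  set D : ℝ := (Fintype.card Λ : ℝ) with hDdef
  have hη0 : 0 ≤ η := by rw [hη]; positivity
  have step1 : ∀ v : Fin b → Λ, f (univ.filter fun j => v j ∈ A j).card ≤
      1 + ∑ J : Finset (Fin b), if ∀ j ∈ J, v j ∈ A j then
        (if 2 ≤ J.card then f J.card else 0) else 0 := by
    intro v
    have hnn : ∀ J : Finset (Fin b), 0 ≤ (if ∀ j ∈ J, v j ∈ A j then
        (if 2 ≤ J.card then f J.card else 0) else 0) := by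
      intro J
      split_ifs
      exacts [hf _, le_rfl, le_rfl]
    set J0 := univ.filter fun j => v j ∈ A j with hJ0
    by_cases h2 : 2 ≤ J0.card
    · have := single_le_sum (fun J _ => hnn J) (mem_univ J0)
      rw [if_pos (by intro j hj; exact (mem_filter.1 hj).2), if_pos h2] at this
      linarith
    · have h3 : f J0.card ≤ 1 := by
        have : J0.card = 0 ∨ J0.card = 1 := by omega
        rcases this with h | h <;> rw [h] <;> assumption
      have := sum_nonneg fun J (_ : J ∈ univ) => hnn J
      linarith
  calc _ ≤ ∑ v : Fin b → Λ, (1 + ∑ J : Finset (Fin b), if ∀ j ∈ J, v j ∈ A j then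
        (if 2 ≤ J.card then f J.card else 0) else 0) := sum_le_sum fun v _ => step1 v
    _ = D ^ b + ∑ J : Finset (Fin b), (if 2 ≤ J.card then f J.card else 0) *
        ((univ.filter fun v : Fin b → Λ => ∀ j ∈ J, v j ∈ A j).card : ℝ) := by
      rw [sum_add_distrib, sum_comm]
      congr 1
      · simp [hDdef]
      · refine sum_congr rfl fun J _ => ?_
        rw [← sum_filter, sum_const, nsmul_eq_mul, mul_comm]
    _ ≤ D ^ b + ∑ J : Finset (Fin b), (if 2 ≤ J.card then f J.card else 0) *
        (D ^ b * (ρ / D) ^ J.card) := by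
      gcongr with J
      · split_ifs
        exacts [hf _, le_rfl]
      · exact card_forall_mem_le A ρ hA J
    _ = D ^ b + D ^ b * ∑ u ∈ range (b + 1), (b.choose u : ℝ) *
          ((if 2 ≤ u then f u else 0) * (ρ / D) ^ u) := by
      congr 1
      have := sum_powerset_apply_card
        (fun u => (if 2 ≤ u then f u else 0) * (D ^ b * (ρ / D) ^ u))
        (x := (univ : Finset (Fin b)))
      rw [powerset_univ] at this
      rw [this, mul_sum, card_univ, Fintype.card_fin]
      refine sum_congr rfl fun u _ => ?_
      rw [nsmul_eq_mul]
      ring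
    _ ≤ D ^ b + D ^ b * ∑ u ∈ range (b + 1), 2 * F * η ^ 2 * (if 2 ≤ u then (1 / 2) ^ (u - 1)
          else 0) := by
      refine add_le_add_right (mul_le_mul_of_nonneg_left (sum_le_sum fun u hu => ?_)
        (by positivity)) _
      by_cases h2 : 2 ≤ u
      · simp only [h2, if_true]
        have hub : u ≤ b := by simpa [Nat.lt_succ_iff] using hu
        obtain ⟨k, rfl⟩ := Nat.exists_eq_add_of_le' h2
        have hfk := hfu _ h2 hub
        simp only [Nat.add_sub_cancel] at hfk
        have hch : ((b.choose (k + 2) : ℕ) : ℝ) ≤ (b : ℝ) ^ (k + 2) := by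
          exact_mod_cast Nat.choose_le_pow b (k + 2)
        calc ((b.choose (k + 2) : ℕ) : ℝ) * (f (k + 2) * (ρ / D) ^ (k + 2))
            ≤ (b : ℝ) ^ (k + 2) * (F * G ^ k * (ρ / D) ^ (k + 2)) := by
              gcongr
              exact mul_nonneg (hf _) (by positivity)
          _ = F * η ^ 2 * (η * G) ^ k := by rw [hη]; ring
          _ ≤ F * η ^ 2 * (1 / 2) ^ k := by gcongr
          _ = _ := by
              rw [show k + 2 - 1 = k + 1 by omega, pow_succ]; ring
      · simp [h2]
    _ ≤ D ^ b + D ^ b * (2 * F * η ^ 2 * 1) := by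
      rw [← mul_sum]
      gcongr
      calc ∑ u ∈ range (b + 1), (if 2 ≤ u then (1 / 2 : ℝ) ^ (u - 1) else 0)
          ≤ ∑ u ∈ range (b + 2), (if 2 ≤ u then (1 / 2 : ℝ) ^ (u - 1) else 0) := by
            refine sum_le_sum_of_subset_of_nonneg (range_mono (by omega)) fun u _ _ => ?_
            split_ifs <;> positivity
        _ = ∑ k ∈ range b, (1 / 2 : ℝ) ^ (k + 1) := by
            rw [sum_range_succ', sum_range_succ']
            simp
        _ = 1 / 2 * ∑ k ∈ range b, (1 / 2 : ℝ) ^ k := by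
            rw [mul_sum]
            exact sum_congr rfl fun k _ => by ring
        _ ≤ 1 / 2 * 2 := by
            gcongr
            rw [geom_sum_eq (by norm_num)]
            have : (0 : ℝ) ≤ (1 / 2) ^ b := by positivity
            rw [div_le_iff_of_neg (by norm_num)]
            linarith
        _ = 1 := by norm_num
    _ = _ := by ring

/-- The labels of distinct vertices are independent. -/
lemma sum_prod_columns {V Λ : Type*} [Fintype V] [DecidableEq V] [Fintype Λ] {b : ℕ}
    (g : V → (Fin b → Λ) → ℝ) :
    ∑ ω : Fin b → V → Λ, ∏ z, g z (fun j => ω j z) = ∏ z, ∑ v : Fin b → Λ, g z v := by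
  rw [prod_univ_sum, Fintype.piFinset_univ]
  exact Fintype.sum_equiv (Equiv.piComm fun _ _ => Λ) _ _ fun ω => rfl

/-! ### Lines, families of lines and points with atypical counts -/

/-- Markov's inequality. -/
lemma card_mul_le_sum {Ω : Type*} [Fintype Ω] (P : Ω → Prop) [DecidablePred P] (g : Ω → ℝ) (c : ℝ)
    (hg : ∀ ω, 0 ≤ g ω) (h : ∀ ω, P ω → c ≤ g ω) :
    ((univ.filter P).card : ℝ) * c ≤ ∑ ω, g ω := by
  calc ((univ.filter P).card : ℝ) * c = ∑ ω ∈ univ.filter P, c := by simp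
    _ ≤ ∑ ω ∈ univ.filter P, g ω := sum_le_sum fun ω hω => h ω (mem_filter.1 hω).2
    _ ≤ _ := sum_le_sum_of_subset_of_nonneg (filter_subset _ _) fun ω _ _ => hg ω

/-- The union bound. -/
lemma card_le_of_exists {Ω ι : Type*} [Fintype Ω] (B : Finset Ω) (I : Finset ι) (P : ι → Ω → Prop)
    [∀ i, DecidablePred (P i)] (c : ℝ) (hB : ∀ ω ∈ B, ∃ i ∈ I, P i ω)
    (h : ∀ i ∈ I, ((univ.filter (P i)).card : ℝ) ≤ c) : (B.card : ℝ) ≤ I.card * c := by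
  have hsub : B ⊆ I.biUnion fun i => univ.filter (P i) := by
    intro ω hω
    simpa using hB ω hω
  calc (B.card : ℝ)
      ≤ ∑ i ∈ I, ((univ.filter (P i)).card : ℝ) := by
        exact_mod_cast (card_le_card hsub).trans card_biUnion_le
    _ ≤ ∑ i ∈ I, c := sum_le_sum h
    _ = _ := by simp

lemma card_exists_le {Ω ι : Type*} [Fintype Ω] (I : Finset ι) (P : ι → Ω → Prop)
    [∀ i, DecidablePred (P i)] [DecidablePred fun ω => ∃ i ∈ I, P i ω] (c : ℝ)
    (h : ∀ i ∈ I, ((univ.filter (P i)).card : ℝ) ≤ c) :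
    ((univ.filter fun ω => ∃ i ∈ I, P i ω).card : ℝ) ≤ I.card * c :=
  card_le_of_exists _ I P c (fun _ hω => (mem_filter.1 hω).2) h

lemma card_conf {V Λ : Type*} [Fintype V] [DecidableEq V] [Fintype Λ] (b : ℕ) :
    (Fintype.card (Fin b → V → Λ) : ℝ) = ((Fintype.card Λ : ℝ) ^ b) ^ Fintype.card V := by
  simp [Fintype.card_pi, ← pow_mul, mul_comm]

lemma pow_one_add_le {D ε : ℝ} (hD : 0 ≤ D) (hε : 0 ≤ ε) (n : ℕ) :
    (D * (1 + ε)) ^ n ≤ D ^ n * Real.exp (n * ε) := by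
  rw [mul_pow, mul_comm (n : ℝ), Real.exp_mul, Real.rpow_natCast]
  gcongr
  linarith [Real.add_one_le_exp ε]

lemma prod_columns_le {V Λ : Type*} [Fintype V] [DecidableEq V] [Fintype Λ] {b : ℕ}
    (g : V → (Fin b → Λ) → ℝ) (ε : ℝ) (hg : ∀ z v, 0 ≤ g z v) (hε : 0 ≤ ε)
    (h : ∀ z, ∑ v, g z v ≤ (Fintype.card Λ : ℝ) ^ b * (1 + ε)) :
    ∑ ω : Fin b → V → Λ, ∏ z, g z (fun j => ω j z) ≤
      Fintype.card (Fin b → V → Λ) * Real.exp (Fintype.card V * ε) := by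
  rw [sum_prod_columns, card_conf]
  refine le_trans ?_ (pow_one_add_le (by positivity) hε _)
  refine (prod_le_prod (fun z _ => sum_nonneg fun v _ => hg z v) fun z _ => h z).trans ?_
  rw [prod_const, card_univ]

lemma card_label (N s : ℕ) : (Fintype.card (Fin N × Fin s) : ℝ) = N * s := by simp

lemma card_fiber {N s : ℕ} (B : Finset (Fin N)) :
    ((univ.filter fun l : Fin N × Fin s => l.1 ∈ B).card : ℝ) = B.card * s := by
  have : (univ.filter fun l : Fin N × Fin s => l.1 ∈ B) = B ×ˢ univ := by
    ext l; simp
  rw [this, card_product]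
  simp

lemma le_of_mul_exp_le {x y c d : ℝ} (h : x * Real.exp c ≤ y * Real.exp d) :
    x ≤ y * Real.exp (d - c) := by
  rw [Real.exp_sub, ← mul_div_assoc, le_div_iff₀ (Real.exp_pos _)]
  exact h

/-- A given line carries more than `M` vertices only with small probability. -/
lemma bad_line_count {V : Type*} [Fintype V] [DecidableEq V] {b N s : ℕ} (hN : 0 < N)
    (hs : 0 < s) (M : ℕ)
    (j : Fin b) (a : Fin N) :
    ((univ.filter fun ω : Fin b → V → Fin N × Fin s =>
      M < (univ.filter fun x => (ω j x).1 = a).card).card : ℝ) ≤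
      Fintype.card (Fin b → V → Fin N × Fin s) *
        Real.exp (Fintype.card V * (2 / N) - M) := by
  have : Nonempty (Fin N × Fin s) := ⟨(⟨0, hN⟩, ⟨0, hs⟩)⟩
  have hN' : (0 : ℝ) < N := by exact_mod_cast hN
  have hs' : (0 : ℝ) < s := by exact_mod_cast hs
  apply le_of_mul_exp_le
  refine le_trans ?_ (prod_columns_le (V := V) (Λ := Fin N × Fin s) (b := b)
    (fun _ v => Real.exp (if (v j).1 = a then 1 else 0)) (2 / N)
    (fun _ _ => (Real.exp_pos _).le) (by positivity) fun z => ?_)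
  · apply card_mul_le_sum
    · intro ω; exact prod_nonneg fun _ _ => (Real.exp_pos _).le
    · intro ω hω
      rw [← Real.exp_sum, Real.exp_le_exp, ← sum_filter, sum_const, nsmul_eq_mul, mul_one]
      exact_mod_cast hω.le
  · have h1 : ∀ v : Fin b → Fin N × Fin s, Real.exp (if (v j).1 = a then 1 else 0) ≤
        1 + 2 * (if ∀ k ∈ ({j} : Finset (Fin b)), v k ∈
          univ.filter (fun l : Fin N × Fin s => l.1 ∈ ({a} : Finset (Fin N))) then 1 else 0) := by
      intro v
      by_cases h : (v j).1 = a
      · simp [h]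
        linarith [Real.exp_one_lt_d9]
      · simp [h]
    have h2 := card_forall_mem_le (b := b) (fun _ => univ.filter
      (fun l : Fin N × Fin s => l.1 ∈ ({a} : Finset (Fin N)))) s
      (fun _ => by rw [card_fiber]; simp) {j}
    refine (sum_le_sum fun v _ => h1 v).trans ?_
    rw [sum_add_distrib, ← mul_sum, ← sum_filter]
    simp only [sum_const, nsmul_eq_mul, mul_one, card_univ, Fintype.card_pi, prod_const,
      Fintype.card_fin]
    rw [card_singleton, pow_one] at h2
    have h3 : (s : ℝ) / Fintype.card (Fin N × Fin s) = 1 / N := by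
      rw [card_label]; field_simp
    rw [h3] at h2
    push_cast
    have h4 : (Fintype.card (Fin N × Fin s) : ℝ) ^ b * (1 + 2 / N) =
      (Fintype.card (Fin N × Fin s) : ℝ) ^ b +
        2 * ((Fintype.card (Fin N × Fin s) : ℝ) ^ b * (1 / N)) := by ring
    rw [h4]
    linarith

/-- For a given family of `R` lines per slope, the number of incidences of vertices with pairs of
lines of the family at distinct slopes is large only with small probability. -/
lemma bad_family_count {V : Type*} [Fintype V] [DecidableEq V] {b N s : ℕ} (hN : 0 < N)
    (hs : 0 < s) (R τ : ℕ)
    (lam η : ℝ) (hlam : 0 ≤ lam) (hη : η = b * (R / N))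
    (hsmall : η * Real.exp (2 * lam * b) ≤ 1 / 2)
    (A : Fin b → Finset (Fin N)) (hA : ∀ j, (A j).card = R) :
    ((univ.filter fun ω : Fin b → V → Fin N × Fin s =>
      τ < ∑ z, hits ω A z * (hits ω A z - 1)).card : ℝ) ≤
      Fintype.card (Fin b → V → Fin N × Fin s) *
        Real.exp (Fintype.card V * (2 * Real.exp (2 * lam) * η ^ 2) - lam * τ) := by
  have : Nonempty (Fin N × Fin s) := ⟨(⟨0, hN⟩, ⟨0, hs⟩)⟩
  have hN' : (0 : ℝ) < N := by exact_mod_cast hN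
  have hs' : (0 : ℝ) < s := by exact_mod_cast hs
  apply le_of_mul_exp_le
  set f : ℕ → ℝ := fun u => Real.exp (lam * ((u * (u - 1) : ℕ) : ℝ)) with hf
  set A' : Fin b → Finset (Fin N × Fin s) := fun j => univ.filter fun l => l.1 ∈ A j with hA'
  refine le_trans ?_ (prod_columns_le (V := V) (Λ := Fin N × Fin s) (b := b)
    (fun _ v => f (univ.filter fun j => v j ∈ A' j).card) _
    (fun _ _ => (Real.exp_pos _).le) (by positivity) fun z => ?_)
  · apply card_mul_le_sum
    · intro ω; exact prod_nonneg fun _ _ => (Real.exp_pos _).le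
    · intro ω hω
      rw [← Real.exp_sum, Real.exp_le_exp, ← mul_sum]
      refine mul_le_mul_of_nonneg_left ?_ hlam
      have : ∀ z, (univ.filter fun j => ω j z ∈ A' j).card = hits ω A z := by
        intro z
        simp [hA', hits]
      simp_rw [this]
      exact_mod_cast hω.le
  · refine sum_mgf_le A' (R * s) (Real.exp (2 * lam)) (Real.exp (2 * lam * b)) η ?_ f ?_ ?_ ?_ ?_
      ?_ ?_ ?_ ?_ hsmall
    · intro j
      rw [hA', card_fiber, hA]
    · simp [hf]
    · simp [hf]
    · intro u; exact (Real.exp_pos _).le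
    · positivity
    · positivity
    · positivity
    · intro u h2 hub
      rw [hf, ← Real.exp_nat_mul, ← Real.exp_add, Real.exp_le_exp]
      obtain ⟨k, rfl⟩ := Nat.exists_eq_add_of_le' h2
      rw [show k + 2 - 1 = k + 1 by omega, Nat.add_sub_cancel]
      have hkb : (k : ℝ) + 2 ≤ b := by exact_mod_cast hub
      push_cast
      have hk : (0 : ℝ) ≤ k := by positivity
      nlinarith [mul_nonneg hlam (mul_nonneg hk (by linarith : (0 : ℝ) ≤ b - (k + 2))),
        mul_nonneg hlam (mul_nonneg hk hk), mul_nonneg hlam hk]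
    · rw [card_label, hη]
      field_simp

/-- The number of slopes at which `y` lies on the line through `x`. -/
def meet {V : Type*} {b N s : ℕ} (ω : Fin b → V → Fin N × Fin s) (x y : V) : ℕ :=
  (univ.filter fun i => (ω i y).1 = (ω i x).1).card

/-- The number of slopes at which `x` and `y` are collinear, counted only when there are at least
two of them. -/
def excess {V : Type*} {b N s : ℕ} (ω : Fin b → V → Fin N × Fin s) (x y : V) : ℕ :=
  if 2 ≤ meet ω x y then meet ω x y else 0

/-- For a given vertex `x`, the collinearities with the vertices that share at least two lines with
`x` are numerous only with small probability. -/
lemma bad_point_count {V : Type*} [Fintype V] [DecidableEq V] {b N s : ℕ} (hN : 0 < N)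
    (hs : 0 < s) (ℓ : ℕ)
    (η : ℝ) (hη : η = b * (1 / N)) (hsmall : η * Real.exp 3 ≤ 1 / 2) (x : V) :
    ((univ.filter fun ω : Fin b → V → Fin N × Fin s =>
      ℓ < ∑ y ∈ univ.erase x, excess ω x y).card : ℝ) ≤
      Fintype.card (Fin b → V → Fin N × Fin s) *
        Real.exp (Fintype.card V * (2 * Real.exp 6 * η ^ 2) - 3 * ℓ) := by
  have : Nonempty (Fin N × Fin s) := ⟨(⟨0, hN⟩, ⟨0, hs⟩)⟩
  have hN' : (0 : ℝ) < N := by exact_mod_cast hN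
  have hs' : (0 : ℝ) < s := by exact_mod_cast hs
  have hD : (0 : ℝ) < Fintype.card (Fin N × Fin s) := by exact_mod_cast Fintype.card_pos
  apply le_of_mul_exp_le
  set f : ℕ → ℝ := fun u => Real.exp (3 * ((if 2 ≤ u then u else 0 : ℕ) : ℝ)) with hf
  have hfpos : ∀ u, 0 < f u := fun u => Real.exp_pos _
  set A' : (Fin b → Fin N × Fin s) → Fin b → Finset (Fin N × Fin s) :=
    fun a j => univ.filter fun l => l.1 ∈ ({(a j).1} : Finset (Fin N)) with hA'
  set ε : ℝ := 2 * Real.exp 6 * η ^ 2 with hε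
  -- conditioning on the column `a` of `x` makes the other columns independent
  set g : (Fin b → Fin N × Fin s) → V → (Fin b → Fin N × Fin s) → ℝ := fun a z v =>
    if z = x then (if v = a then 1 else 0) else f (univ.filter fun j => v j ∈ A' a j).card with hg
  have hgnn : ∀ a z v, 0 ≤ g a z v := by
    intro a z v
    simp only [hg]
    split_ifs
    exacts [zero_le_one, le_rfl, (hfpos _).le]
  have hcol : ∀ a z, z ≠ x → ∑ v, g a z v ≤ (Fintype.card (Fin N × Fin s) : ℝ) ^ b * (1 + ε) := by
    intro a z hz
    simp only [hg, if_neg hz]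
    refine sum_mgf_le (A' a) s (Real.exp 6) (Real.exp 3) η ?_ f ?_ ?_ ?_ ?_
      ?_ ?_ ?_ ?_ hsmall
    · intro j
      rw [hA', card_fiber]; simp
    · simp [hf]
    · simp [hf]
    · intro u; exact (hfpos u).le
    · positivity
    · positivity
    · positivity
    · intro u h2 hub
      simp only [hf, if_pos h2]
      rw [← Real.exp_nat_mul, ← Real.exp_add, Real.exp_le_exp]
      obtain ⟨k, rfl⟩ := Nat.exists_eq_add_of_le' h2
      rw [Nat.add_sub_cancel]
      push_cast
      linarith
    · rw [card_label, hη]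
      field_simp
  have hfix : ∀ a, ∑ ω : Fin b → V → Fin N × Fin s, ∏ z, g a z (fun j => ω j z) ≤
      ((Fintype.card (Fin N × Fin s) : ℝ) ^ b * (1 + ε)) ^ (Fintype.card V - 1) := by
    intro a
    rw [sum_prod_columns, ← mul_prod_erase univ _ (mem_univ x)]
    have h1 : ∑ v, g a x v = 1 := by simp [hg]
    rw [h1, one_mul]
    have h2 : (univ.erase x).card = Fintype.card V - 1 := by
      rw [card_erase_of_mem (mem_univ x), card_univ]
    rw [← h2, ← prod_const]
    exact prod_le_prod (fun z _ => sum_nonneg fun v _ => hgnn a z v)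
      fun z hz => hcol a z (ne_of_mem_erase hz)
  have hmain : ((univ.filter fun ω : Fin b → V → Fin N × Fin s =>
      ℓ < ∑ y ∈ univ.erase x, excess ω x y).card : ℝ) * Real.exp (3 * ℓ) ≤
      ∑ ω : Fin b → V → Fin N × Fin s, ∑ a, ∏ z, g a z (fun j => ω j z) := by
    apply card_mul_le_sum
    · intro ω; exact sum_nonneg fun a _ => prod_nonneg fun z _ => hgnn _ _ _
    · intro ω hω
      refine le_trans ?_ (single_le_sum (fun a _ => prod_nonneg fun z _ => hgnn a z _)
        (mem_univ (fun j => ω j x)))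
      rw [← mul_prod_erase univ _ (mem_univ x)]
      have h1 : g (fun j => ω j x) x (fun j => ω j x) = 1 := by simp [hg]
      have h2 : ∏ z ∈ univ.erase x, g (fun j => ω j x) z (fun j => ω j z) =
          ∏ z ∈ univ.erase x, Real.exp (3 * (excess ω x z : ℝ)) := by
        refine prod_congr rfl fun z hz => ?_
        simp only [hg, if_neg (ne_of_mem_erase hz), hf, excess, meet, hA', mem_filter, mem_univ,
          true_and, mem_singleton]
        congr!
      rw [h1, h2, one_mul, ← Real.exp_sum, Real.exp_le_exp, ← mul_sum]
      have : (ℓ : ℝ) ≤ ∑ y ∈ univ.erase x, (excess ω x y : ℝ) := by exact_mod_cast hω.le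
      linarith
  refine hmain.trans ?_
  rw [sum_comm]
  refine (sum_le_sum fun a _ => hfix a).trans ?_
  rw [sum_const, nsmul_eq_mul, card_univ, card_conf]
  have hV : 0 < Fintype.card V := Fintype.card_pos_iff.2 ⟨x⟩
  have hε0 : 0 ≤ ε := by positivity
  calc (Fintype.card (Fin b → Fin N × Fin s) : ℝ) *
        ((Fintype.card (Fin N × Fin s) : ℝ) ^ b * (1 + ε)) ^ (Fintype.card V - 1)
      = (Fintype.card (Fin N × Fin s) : ℝ) ^ b *
        ((Fintype.card (Fin N × Fin s) : ℝ) ^ b * (1 + ε)) ^ (Fintype.card V - 1) := by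
        simp [Fintype.card_pi]
    _ ≤ ((Fintype.card (Fin N × Fin s) : ℝ) ^ b * (1 + ε)) *
        ((Fintype.card (Fin N × Fin s) : ℝ) ^ b * (1 + ε)) ^ (Fintype.card V - 1) := by
        gcongr
        exact le_mul_of_one_le_right (by positivity) (by linarith)
    _ = ((Fintype.card (Fin N × Fin s) : ℝ) ^ b * (1 + ε)) ^ (Fintype.card V) := by
        rw [← pow_succ', Nat.sub_add_cancel hV]
    _ ≤ _ := pow_one_add_le (by positivity) hε0 _

/-! ### Good bins -/

/-- The bin (that is, line) `a` contains an `s`-set of points of `W`, one for every colour, none of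
which is related by `Γ` to one of a smaller colour. -/
def GoodBin {V : Type*} {N s : ℕ} (Γ : V → V → Prop) (W : Finset V) (x : V → Fin N × Fin s)
    (a : Fin N) : Prop :=
  ∃ κ : Fin s → V, ∀ r, κ r ∈ W ∧ x (κ r) = (a, r) ∧ ∀ q < r, ¬ Γ (κ r) (κ q)

/-- A greedy search through the layers `e 0, e 1, …` for a good configuration in the bin `a`
cannot be continued at layer `r`. -/
def Stuck {V : Type*} {N s w : ℕ} (Γ : V → V → Prop) (e : Fin s → Fin w → V)
    (x : V → Fin N × Fin s) (a : Fin N) (r : Fin s) : Prop :=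
  ∃ k : Fin s → Fin w, (∀ q < r, x (e q (k q)) = (a, q)) ∧
    ∀ i, x (e r i) = (a, r) → ∃ q < r, Γ (e r i) (e q (k q))

/-- The greedy search in a bin that is not good gets stuck at some layer. -/
lemma exists_stuck {V : Type*} {N s w : ℕ} (hw : 0 < w) (Γ : V → V → Prop) (W : Finset V)
    (e : Fin s → Fin w → V) (heW : ∀ q i, e q i ∈ W) (x : V → Fin N × Fin s) (a : Fin N)
    (h : ¬ GoodBin Γ W x a) : ∃ r, Stuck Γ e x a r := by
  by_contra hcon
  have hns : ∀ (r : Fin s) (k : Fin s → Fin w), (∀ q < r, x (e q (k q)) = (a, q)) →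
      ∃ i, x (e r i) = (a, r) ∧ ∀ q < r, ¬ Γ (e r i) (e q (k q)) := by
    intro r k hk
    by_contra hno
    refine hcon ⟨r, k, hk, fun i hi => ?_⟩
    by_contra hq
    exact hno ⟨i, hi, fun q hqr hΓ => hq ⟨q, hqr, hΓ⟩⟩
  have key : ∀ m ≤ s, ∃ k : Fin s → Fin w, ∀ q : Fin s, q.val < m →
      x (e q (k q)) = (a, q) ∧ ∀ q' < q, ¬ Γ (e q (k q)) (e q' (k q')) := by
    intro m
    induction m with
    | zero => exact fun _ => ⟨fun _ => ⟨0, hw⟩, fun q hq => absurd hq (Nat.not_lt_zero _)⟩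
    | succ m ih =>
      intro hm
      obtain ⟨k, hk⟩ := ih (by omega)
      obtain ⟨i, hi1, hi2⟩ := hns ⟨m, hm⟩ k fun q hq => (hk q hq).1
      refine ⟨Function.update k ⟨m, hm⟩ i, fun q hq => ?_⟩
      have hlt : ∀ q' : Fin s, q'.val < m → Function.update k ⟨m, hm⟩ i q' = k q' := by
        intro q' hq'
        refine Function.update_of_ne ?_ _ _
        intro h
        rw [h] at hq'
        exact lt_irrefl _ hq'
      rcases Nat.lt_succ_iff_lt_or_eq.1 hq with h1 | h1
      · rw [hlt q h1]
        refine ⟨(hk q h1).1, fun q' hq' => ?_⟩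
        rw [hlt q' (lt_trans hq' h1)]
        exact (hk q h1).2 q' hq'
      · have hqm : q = ⟨m, hm⟩ := Fin.ext h1
        subst hqm
        rw [Function.update_self]
        refine ⟨hi1, fun q' hq' => ?_⟩
        rw [hlt q' hq']
        exact hi2 q' hq'
  obtain ⟨k, hk⟩ := key s le_rfl
  exact h ⟨fun r => e r (k r), fun r => ⟨heW _ _, (hk r r.2).1, (hk r r.2).2⟩⟩

/-- The labelling `x` puts the prescribed points `e q (K (a, q))` in the bins `a ∈ U`, and layer `r`
extends none of the resulting partial configurations. -/
def Blocked {V : Type*} {N s w : ℕ} (Γ : V → V → Prop) (e : Fin s → Fin w → V) (r : Fin s)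
    (U : Finset (Fin N)) (K : ↥(U ×ˢ Iio r) → Fin w) (x : V → Fin N × Fin s) : Prop :=
  (∀ p, x (e p.1.2 (K p)) = p.1) ∧
    ∀ i a, a ∈ U → x (e r i) = (a, r) → ∃ p : ↥(U ×ˢ Iio r), p.1.1 = a ∧
      Γ (e r i) (e p.1.2 (K p))

/-- Each point of layer `r` is related to at most `u / 2` points of `W`, hence to prescribed points in
at most half of the `u` bins of `U`. So it has at least `u / 2` labels that would extend a partial
configuration, and independently of the other points it must avoid all of them. -/
lemma card_blocked_le {V : Type*} [Fintype V] [DecidableEq V] {N s w u : ℕ} (hN : 0 < N)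
    (hs : 0 < s)
    (Γ : V → V → Prop) (W : Finset V)
    (e : Fin s → Fin w → V) (he : ∀ q i q' i', e q i = e q' i' → q = q' ∧ i = i')
    (heW : ∀ q i, e q i ∈ W)
    (hlow : ∀ q i, 2 * (W.filter fun y => Γ (e q i) y).card ≤ u) (r : Fin s)
    (U : Finset (Fin N)) (hU : U.card = u) (K : ↥(U ×ˢ Iio r) → Fin w) :
    ((univ.filter fun x : V → Fin N × Fin s => Blocked Γ e r U K x).card : ℝ) ≤
      Fintype.card (V → Fin N × Fin s) * ((1 / (N * s)) ^ (u * r.val) *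
        Real.exp (-(u / (2 * (N * s)) * w))) := by
  have hN' : (0 : ℝ) < N := by exact_mod_cast hN
  have hs' : (0 : ℝ) < s := by exact_mod_cast hs
  set D : ℝ := N * s with hD
  have hDpos : 0 < D := by positivity
  by_cases hne : ∃ x, Blocked Γ e r U K x
  swap
  · have : (univ.filter fun x : V → Fin N × Fin s => Blocked Γ e r U K x) = ∅ := by
      rw [filter_eq_empty_iff]
      exact fun x _ hx => hne ⟨x, hx⟩
    rw [this]
    simp only [card_empty, Nat.cast_zero]
    positivity
  obtain ⟨x0, hx0⟩ := hne
  set P : ↥(U ×ˢ Iio r) → V := fun p => e p.1.2 (K p) with hP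
  have hPinj : Function.Injective P := by
    intro p p' h
    apply Subtype.ext
    rw [← hx0.1 p, ← hx0.1 p']
    exact congrArg x0 h
  set F : V → Finset (Fin N) := fun v => U.filter fun a => ¬ ∃ p : ↥(U ×ˢ Iio r), p.1.1 = a ∧
      Γ v (P p) with hF
  have hFcard : ∀ i, u ≤ 2 * (F (e r i)).card := by
    intro i
    have h1 := card_filter_add_card_filter_not (s := U)
      (fun a => ∃ p : ↥(U ×ˢ Iio r), p.1.1 = a ∧ Γ (e r i) (P p))
    have h2 : (U.filter fun a => ∃ p : ↥(U ×ˢ Iio r), p.1.1 = a ∧ Γ (e r i) (P p)).card ≤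
        (W.filter fun y => Γ (e r i) y).card := by
      have hsub : (U.filter fun a => ∃ p : ↥(U ×ˢ Iio r), p.1.1 = a ∧ Γ (e r i) (P p)) ⊆
          (W.filter fun y => Γ (e r i) y).image fun y => (x0 y).1 := by
        intro a ha
        obtain ⟨-, p, hp1, hp2⟩ := mem_filter.1 ha
        rw [mem_image]
        refine ⟨P p, mem_filter.2 ⟨heW _ _, hp2⟩, ?_⟩
        rw [hx0.1 p, hp1]
      exact (card_le_card hsub).trans card_image_le
    have h3 := hlow r i
    simp only [hF]
    omega
  set Q : Finset V := univ.image P with hQ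
  set Z : Finset V := univ.image (e r) with hZ
  have hQcard : Q.card = u * r.val := by
    rw [hQ, card_image_of_injective _ hPinj, card_univ, Fintype.card_coe, card_product, hU]
    simp
  have hZcard : Z.card = w := by
    rw [hZ, card_image_of_injective _ fun i i' h => (he _ _ _ _ h).2, card_univ, Fintype.card_fin]
  have hQZ : ∀ v ∈ Q, v ∉ Z := by
    intro v hv hv'
    obtain ⟨p, -, rfl⟩ := mem_image.1 hv
    obtain ⟨i, -, hi⟩ := mem_image.1 hv'
    have h1 := (he _ _ _ _ hi).1
    have h2 := (mem_product.1 p.2).2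
    rw [mem_Iio, ← h1] at h2
    exact lt_irrefl _ h2
  -- `S v` is the set of labels of `v` compatible with the blocked event;
  -- the event lies in the product of these sets
  set S : V → Finset (Fin N × Fin s) := fun v =>
    if v ∈ Q then {x0 v} else if v ∈ Z then (F v ×ˢ {r})ᶜ else univ with hS
  have hsub : (univ.filter fun x : V → Fin N × Fin s => Blocked Γ e r U K x) ⊆
      Fintype.piFinset S := by
    intro x hx
    have hx' := (mem_filter.1 hx).2
    rw [Fintype.mem_piFinset]
    intro v
    simp only [hS]
    split_ifs with h1 h2
    · obtain ⟨p, -, rfl⟩ := mem_image.1 h1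
      rw [mem_singleton, hx'.1 p, hx0.1 p]
    · obtain ⟨i, -, rfl⟩ := mem_image.1 h2
      rw [mem_compl, mem_product, mem_singleton]
      rintro ⟨h3, h4⟩
      obtain ⟨h5, h6⟩ := mem_filter.1 h3
      exact h6 (hx'.2 i _ h5 (Prod.ext rfl h4))
    · exact mem_univ _
  have hc0 : (0 : ℝ) ≤ Real.exp (-(u / (2 * D))) := (Real.exp_pos _).le
  have hfac : ∀ v, ((S v).card : ℝ) ≤ D * ((if v ∈ Q then 1 / D else 1) *
      (if v ∈ Z then Real.exp (-(u / (2 * D))) else 1)) := by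
    intro v
    simp only [hS]
    by_cases h1 : v ∈ Q
    · simp [h1, hQZ v h1, hDpos.ne']
    · by_cases h2 : v ∈ Z
      · simp only [h1, h2, if_true, if_false, one_mul]
        obtain ⟨i, -, rfl⟩ := mem_image.1 h2
        have h3 := hFcard i
        have h4 : (((F (e r i) ×ˢ {r})ᶜ : Finset (Fin N × Fin s)).card : ℝ) =
            D - (F (e r i)).card := by
          rw [card_compl, Nat.cast_sub (card_le_univ _), card_label, card_product,
            card_singleton, mul_one]
        have h5 : (u : ℝ) ≤ 2 * (F (e r i)).card := by exact_mod_cast h3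
        rw [h4]
        calc D - (F (e r i)).card ≤ D * (-(u / (2 * D)) + 1) := by
              field_simp
              linarith
          _ ≤ _ := by gcongr; exact Real.add_one_le_exp _
      · simp only [h1, h2, if_false, mul_one]
        rw [card_univ, card_label]
  calc ((univ.filter fun x : V → Fin N × Fin s => Blocked Γ e r U K x).card : ℝ)
      ≤ ∏ v, ((S v).card : ℝ) := by
        have := card_le_card hsub
        rw [Fintype.card_piFinset] at this
        exact_mod_cast this
    _ ≤ ∏ v, D * ((if v ∈ Q then 1 / D else 1) *
          (if v ∈ Z then Real.exp (-(u / (2 * D))) else 1)) :=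
        prod_le_prod (fun _ _ => by positivity) fun v _ => hfac v
    _ = _ := by
        rw [prod_mul_distrib, prod_mul_distrib, prod_mul_distrib, prod_ite_mem, prod_ite_mem,
          prod_const, prod_const, prod_const, prod_const, univ_inter, univ_inter, hQcard, hZcard,
          ← Real.exp_nat_mul]
        congr 1
        · simp [mul_pow]
        · congr 2
          ring

/-- A set of `s * w` points splits into `s` disjoint layers of size `w`. -/
lemma exists_layers {V : Type*} (P : Finset V) (s w : ℕ) (h : s * w ≤ P.card) :
    ∃ e : Fin s → Fin w → V, (∀ q i q' i', e q i = e q' i' → q = q' ∧ i = i') ∧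
      ∀ q i, e q i ∈ P := by
  have : Nonempty (Fin s × Fin w ↪ P) := by
    apply Function.Embedding.nonempty_of_card_le
    simpa using h
  obtain ⟨f⟩ := this
  refine ⟨fun q i => f (q, i), fun q i q' i' h => ?_, fun q i => (f (q, i)).2⟩
  have := f.injective (Subtype.ext h)
  exact Prod.mk.injEq _ _ _ _ ▸ this

/-- For a uniformly random labelling and a set `W` of size `2sw` with few conflicts, fewer than
`su` bins are good only with very small probability. -/
lemma card_few_good_le {V : Type*} [Fintype V] [DecidableEq V] {N s w u κ : ℕ} (hs : 0 < s)
    (hu : 0 < u)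
    (hκ : 0 < κ) (hN : N = 2 * s * u) (hw : w = κ * (N * s))
    (Γ : V → V → Prop) (W : Finset V) (hW : W.card = 2 * (s * w)) (hlow : LowDeg Γ W u) :
    ((univ.filter fun x : V → Fin N × Fin s =>
      (univ.filter fun a => GoodBin Γ W x a).card < s * u).card : ℝ) ≤
      Fintype.card (V → Fin N × Fin s) *
        (s * (2 ^ N * (κ ^ (s * u) * Real.exp (-(u * κ / 2))))) := by
  have hN0 : 0 < N := by rw [hN]; positivity
  have hw0 : 0 < w := by rw [hw]; positivity
  have hN' : (0 : ℝ) < N := by exact_mod_cast hN0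
  have hs' : (0 : ℝ) < s := by exact_mod_cast hs
  unfold LowDeg at hlow
  obtain ⟨e, he, heP⟩ := exists_layers
    (W.filter fun x => 2 * (W.filter fun y => Γ x y).card ≤ u) s w (by omega)
  have heW : ∀ q i, e q i ∈ W := fun q i => (mem_filter.1 (heP q i)).1
  have hel : ∀ q i, 2 * (W.filter fun y => Γ (e q i) y).card ≤ u :=
    fun q i => (mem_filter.1 (heP q i)).2
  have hsub : (univ.filter fun x : V → Fin N × Fin s =>
      (univ.filter fun a => GoodBin Γ W x a).card < s * u) ⊆
      univ.filter fun x : V → Fin N × Fin s => ∃ r ∈ (univ : Finset (Fin s)),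
        ∃ U ∈ powersetCard u (univ : Finset (Fin N)),
        ∃ K ∈ (univ : Finset (↥(U ×ˢ Iio r) → Fin w)), Blocked Γ e r U K x := by
    intro x hx
    replace hx := (mem_filter.1 hx).2
    rw [mem_filter]
    refine ⟨mem_univ _, ?_⟩
    have h1 : ∀ a, ∃ r, ¬ GoodBin Γ W x a → Stuck Γ e x a r := by
      intro a
      by_cases ha : GoodBin Γ W x a
      · exact ⟨⟨0, hs⟩, fun h => absurd ha h⟩
      · obtain ⟨r, hr⟩ := exists_stuck hw0 Γ W e heW x a ha
        exact ⟨r, fun _ => hr⟩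
    choose ρ hρ using h1
    have h2 := card_filter_add_card_filter_not (s := (univ : Finset (Fin N)))
      (fun a => GoodBin Γ W x a)
    rw [card_univ, Fintype.card_fin] at h2
    have h3 : (univ : Finset (Fin s)).card * u ≤
        (univ.filter fun a => ¬ GoodBin Γ W x a).card := by
      rw [card_univ, Fintype.card_fin]
      have : N = s * u + s * u := by rw [hN]; ring
      omega
    obtain ⟨r, -, hr⟩ := exists_le_card_fiber_of_mul_le_card_of_maps_to
      (f := ρ) (fun a _ => mem_univ (ρ a)) ⟨⟨0, hs⟩, mem_univ _⟩ h3
    obtain ⟨U, hU1, hU2⟩ := exists_subset_card_eq hr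
    have hst : ∀ a : Fin N, ∃ k : Fin s → Fin w, a ∈ U → (∀ q < r, x (e q (k q)) = (a, q)) ∧
        ∀ i, x (e r i) = (a, r) → ∃ q < r, Γ (e r i) (e q (k q)) := by
      intro a
      by_cases ha : a ∈ U
      · have h4 := mem_filter.1 (hU1 ha)
        have h5 := hρ a (mem_filter.1 h4.1).2
        rw [h4.2] at h5
        obtain ⟨k, hk⟩ := h5
        exact ⟨k, fun _ => hk⟩
      · exact ⟨fun _ => ⟨0, hw0⟩, fun h => absurd h ha⟩
    choose k hk using hst
    refine ⟨r, mem_univ _, U, mem_powersetCard.2 ⟨subset_univ _, hU2⟩,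
      fun p => k p.1.1 p.1.2, mem_univ _, ?_, ?_⟩
    · intro p
      have hp := mem_product.1 p.2
      exact (hk _ hp.1).1 _ (mem_Iio.1 hp.2)
    · intro i a ha hxi
      obtain ⟨q, hq, hΓ⟩ := (hk a ha).2 i hxi
      exact ⟨⟨(a, q), mem_product.2 ⟨ha, mem_Iio.2 hq⟩⟩, rfl, hΓ⟩
  refine (Nat.cast_le.2 (card_le_card hsub)).trans ?_
  have hT : (0 : ℝ) ≤ Fintype.card (V → Fin N × Fin s) := by positivity
  -- union bound over the layer `r`, the set `U` of `u` bins stuck there, and the points `K` chosen;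
  -- the `w ^ (u * r)` choices of `K` are paid for by the prescribed labels up to `κ ^ (u * r)`
  calc _ ≤ ((univ : Finset (Fin s)).card : ℝ) * (2 ^ N *
        (Fintype.card (V → Fin N × Fin s) * (κ ^ (s * u) * Real.exp (-(u * κ / 2))))) := by
        apply card_exists_le
        intro r _
        refine (card_exists_le (powersetCard u (univ : Finset (Fin N))) _
          (Fintype.card (V → Fin N × Fin s) * (κ ^ (s * u) * Real.exp (-(u * κ / 2)))) ?_).trans ?_
        · intro U hU
          have hU' := (mem_powersetCard.1 hU).2
          refine (card_exists_le _ _ _ fun K _ =>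
            card_blocked_le hN0 hs Γ W e he heW hel r U hU' K).trans ?_
          have hcard : ((univ : Finset (↥(U ×ˢ Iio r) → Fin w)).card : ℝ) =
              (w : ℝ) ^ (u * r.val) := by
            rw [card_univ, Fintype.card_fun, Fintype.card_coe, card_product, hU', Fintype.card_fin]
            simp
          rw [hcard]
          have hwr : (w : ℝ) = κ * (N * s) := by exact_mod_cast hw
          have e1 : (w : ℝ) ^ (u * r.val) * (1 / (N * s)) ^ (u * r.val) =
              (κ : ℝ) ^ (u * r.val) := by
            rw [← mul_pow, hwr]
            congr 1
            field_simp
          have e2 : -((u : ℝ) / (2 * (N * s)) * w) = -(u * κ / 2) := by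
            rw [hwr]; field_simp
          have e3 : (κ : ℝ) ^ (u * r.val) ≤ (κ : ℝ) ^ (s * u) := by
            refine pow_le_pow_right₀ (by exact_mod_cast hκ) ?_
            rw [mul_comm s u]
            exact Nat.mul_le_mul_left _ r.2.le
          rw [e2]
          calc _ = Fintype.card (V → Fin N × Fin s) * (((w : ℝ) ^ (u * r.val) *
                (1 / (N * s)) ^ (u * r.val)) * Real.exp (-(u * κ / 2))) := by ring
            _ ≤ _ := by rw [e1]; gcongr
        · gcongr
          rw [card_powersetCard, card_univ, Fintype.card_fin]
          exact_mod_cast Nat.choose_le_two_pow N u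
    _ = _ := by
        rw [card_univ, Fintype.card_fin]
        ring

/-! ### Exposing the slopes one at a time -/

/-- Resampling one coordinate preserves the uniform distribution. -/
lemma sum_update {Λ : Type*} [Fintype Λ] {b : ℕ} (m : Fin b) (f : (Fin b → Λ) → ℝ) :
    ∑ ω : Fin b → Λ, ∑ x : Λ, f (Function.update ω m x) = Fintype.card Λ * ∑ ω, f ω := by
  have hinv : Function.Involutive
      (fun p : (Fin b → Λ) × Λ => (Function.update p.1 m p.2, p.1 m)) := by
    intro p
    simp
  have h := Fintype.sum_equiv hinv.toPerm (fun p => f (Function.update p.1 m p.2))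
    (fun p => f p.1) fun p => rfl
  rw [Fintype.sum_prod_type, Fintype.sum_prod_type] at h
  rw [h, mul_sum]
  simp

/-- Events revealed one slope at a time, each of conditional probability at most `p`, occur
simultaneously for all `i ∈ I` with probability at most `p ^ |I|`. -/
lemma card_forall_bad_le {Λ : Type*} [Fintype Λ] [Nonempty Λ] {b : ℕ}
    (Bad : Fin b → (Fin b → Λ) → Λ → Prop) (p : ℝ) (hp0 : 0 ≤ p)
    (hdep : ∀ i ω ω' x, (∀ j < i, ω j = ω' j) → (Bad i ω x ↔ Bad i ω' x))
    (hp : ∀ i ω, ((univ.filter fun x => Bad i ω x).card : ℝ) ≤ Fintype.card Λ * p)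
    (I : Finset (Fin b)) :
    ((univ.filter fun ω : Fin b → Λ => ∀ i ∈ I, Bad i ω (ω i)).card : ℝ) ≤
      Fintype.card (Fin b → Λ) * p ^ I.card := by
  have hC : (0 : ℝ) < Fintype.card Λ := by exact_mod_cast Fintype.card_pos
  induction I using Finset.induction_on_max with
  | empty => simp
  | insert m I hmax ih =>
    have hm : m ∉ I := fun h => lt_irrefl _ (hmax m h)
    rw [card_insert_of_notMem hm]
    have h1 := sum_update m (fun ω : Fin b → Λ =>
      if ∀ i ∈ insert m I, Bad i ω (ω i) then (1 : ℝ) else 0)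
    have h2 : ∀ (ω : Fin b → Λ) (x : Λ),
        (∀ i ∈ insert m I, Bad i (Function.update ω m x) (Function.update ω m x i)) ↔
          (∀ i ∈ I, Bad i ω (ω i)) ∧ Bad m ω x := by
      intro ω x
      rw [forall_mem_insert, and_comm, Function.update_self]
      refine and_congr (forall₂_congr fun i hi => ?_) ?_
      · rw [Function.update_of_ne (hmax i hi).ne]
        exact hdep _ _ _ _ fun j hj => Function.update_of_ne (hj.trans (hmax i hi)).ne _ _
      · exact hdep _ _ _ _ fun j hj => Function.update_of_ne hj.ne _ _
    have h1' : ∑ ω : Fin b → Λ, ∑ x, (if (∀ i ∈ I, Bad i ω (ω i)) ∧ Bad m ω x then (1 : ℝ) else 0)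
        = ∑ ω : Fin b → Λ, ∑ x, if ∀ i ∈ insert m I, Bad i (Function.update ω m x)
          (Function.update ω m x i) then (1 : ℝ) else 0 :=
      sum_congr rfl fun ω _ => sum_congr rfl fun x _ => if_congr (h2 ω x).symm rfl rfl
    rw [← h1'] at h1
    have h3 : ∀ ω : Fin b → Λ, ∑ x, (if (∀ i ∈ I, Bad i ω (ω i)) ∧ Bad m ω x then (1 : ℝ) else 0)
        ≤ if ∀ i ∈ I, Bad i ω (ω i) then Fintype.card Λ * p else 0 := by
      intro ω
      by_cases h : ∀ i ∈ I, Bad i ω (ω i)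
      · rw [if_pos h]
        simp only [and_iff_right h]
        have := hp m ω
        rw [card_filter] at this
        push_cast at this
        simpa using this
      · simp [h]
    have h4 := sum_le_sum fun ω (_ : ω ∈ univ) => h3 ω
    rw [h1, ← sum_filter, ← sum_filter, sum_const, sum_const, nsmul_eq_mul, nsmul_eq_mul,
      mul_one] at h4
    have h5 : (Fintype.card Λ : ℝ) * ((univ.filter fun ω : Fin b → Λ =>
        ∀ i ∈ insert m I, Bad i ω (ω i)).card : ℝ) ≤
        Fintype.card Λ * (Fintype.card (Fin b → Λ) * p ^ (I.card + 1)) := by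
      refine h4.trans ?_
      calc _ ≤ (Fintype.card (Fin b → Λ) * p ^ I.card) * (Fintype.card Λ * p) := by gcongr
        _ = _ := by ring
    exact le_of_mul_le_mul_left h5 hC

/-- The slope `i` with labelling `x` is bad for `W`: at least half of `W` has few conflicts,
and yet few bins are good. -/
def BadAt {V : Type*} {b N s : ℕ} (W : Finset V) (u : ℕ) (i : Fin b)
    (ω : Fin b → V → Fin N × Fin s) (x : V → Fin N × Fin s) : Prop :=
  LowDeg (Conflict ω i) W u ∧ (univ.filter fun a => GoodBin (Conflict ω i) W x a).card < s * u

/-- Conflicts at slope `i` are determined by the earlier slopes. -/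
lemma conflict_congr {V : Type*} {b N s : ℕ} {ω ω' : Fin b → V → Fin N × Fin s} {i : Fin b}
    (h : ∀ j < i, ω j = ω' j) : Conflict ω i = Conflict ω' i := by
  have key : ∀ {ω ω' : Fin b → V → Fin N × Fin s}, (∀ j < i, ω j = ω' j) →
      ∀ x y, Conflict ω i x y → Conflict ω' i x y := by
    rintro ω ω' h x y ⟨z, j, k, hj, hk, hjk, h1, h2⟩
    exact ⟨z, j, k, hj, hk, hjk, by rw [← h j hj]; exact h1, by rw [← h k hk]; exact h2⟩
  ext x y
  exact ⟨key h x y, key (fun j hj => (h j hj).symm) x y⟩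

/-- At least `h` slopes are bad for a given `W` only with tiny probability. -/
lemma card_many_bad_le {V : Type*} [Fintype V] [DecidableEq V] {b N s w u κ : ℕ} (hs : 0 < s)
    (hu : 0 < u)
    (hκ : 0 < κ) (hN : N = 2 * s * u) (hw : w = κ * (N * s)) (p : ℝ)
    (hp : s * (2 ^ N * (κ ^ (s * u) * Real.exp (-(u * κ / 2)))) ≤ p)
    (W : Finset V) (hW : W.card = 2 * (s * w)) (h : ℕ) :
    ((univ.filter fun ω : Fin b → V → Fin N × Fin s =>
      h ≤ (univ.filter fun i => BadAt W u i ω (ω i)).card).card : ℝ) ≤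
      Fintype.card (Fin b → V → Fin N × Fin s) * (2 ^ b * p ^ h) := by
  have hN0 : 0 < N := by rw [hN]; positivity
  have : Nonempty (Fin N × Fin s) := ⟨(⟨0, hN0⟩, ⟨0, hs⟩)⟩
  have hp0 : 0 ≤ p := le_trans (by positivity) hp
  have hsub : (univ.filter fun ω : Fin b → V → Fin N × Fin s =>
      h ≤ (univ.filter fun i => BadAt W u i ω (ω i)).card) ⊆
      univ.filter fun ω : Fin b → V → Fin N × Fin s =>
        ∃ I ∈ powersetCard h (univ : Finset (Fin b)), ∀ i ∈ I, BadAt W u i ω (ω i) := by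
    intro ω hω
    obtain ⟨I, hI1, hI2⟩ := exists_subset_card_eq (mem_filter.1 hω).2
    rw [mem_filter]
    exact ⟨mem_univ _, I, mem_powersetCard.2 ⟨subset_univ _, hI2⟩,
      fun i hi => (mem_filter.1 (hI1 hi)).2⟩
  refine (Nat.cast_le.2 (card_le_card hsub)).trans ?_
  refine (card_exists_le _ _ (Fintype.card (Fin b → V → Fin N × Fin s) * p ^ h) ?_).trans ?_
  · intro I hI
    have hI' := (mem_powersetCard.1 hI).2
    rw [← hI']
    refine card_forall_bad_le (BadAt W u) p hp0 ?_ ?_ I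
    · intro i ω ω' x hωω'
      unfold BadAt
      rw [conflict_congr hωω']
    · intro i ω
      by_cases hlow : LowDeg (Conflict ω i) W u
      · refine le_trans ?_ ((card_few_good_le hs hu hκ hN hw (Conflict ω i) W hW hlow).trans ?_)
        · exact_mod_cast card_le_card fun x hx => by
            rw [mem_filter] at hx ⊢
            exact ⟨mem_univ _, hx.2.2⟩
        · gcongr
      · have : (univ.filter fun x => BadAt W u i ω x) = ∅ := by
          rw [filter_eq_empty_iff]
          exact fun x _ hx => hlow hx.1
        rw [this]
        simp only [card_empty, Nat.cast_zero]
        positivity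
  · rw [card_powersetCard, card_univ, Fintype.card_fin]
    have : ((b.choose h : ℕ) : ℝ) ≤ 2 ^ b := by exact_mod_cast Nat.choose_le_two_pow b h
    calc _ ≤ (2 : ℝ) ^ b * (Fintype.card (Fin b → V → Fin N × Fin s) * p ^ h) := by gcongr
      _ = _ := by ring

/-- If `W` contains no `K_s`, the `s`-set in a good bin is not a clique, and the only possible
obstruction is a pair sharing a line at a second slope. -/
lemma exists_meet_of_goodBin {V : Type*} {b N s : ℕ} (ω : Fin b → V → Fin N × Fin s)
    (W : Finset V) (hfree : ∀ S ⊆ W, ¬ (graph ω).IsNClique s S) (i : Fin b) (a : Fin N)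
    (h : GoodBin (Conflict ω i) W (ω i) a) :
    ∃ x ∈ W, ∃ y ∈ W, y ≠ x ∧ (ω i x).1 = a ∧ (ω i y).1 = a ∧ 2 ≤ meet ω x y := by
  obtain ⟨κ, hκ⟩ := h
  by_contra hcon
  push Not at hcon
  have hinj : Function.Injective κ := by
    intro q r hqr
    have h1 := (hκ q).2.1
    have h2 := (hκ r).2.1
    rw [hqr, h2] at h1
    exact (Prod.mk.inj h1).2.symm
  have hedge : ∀ r, ∀ q < r, EdgeAt ω i (κ r) (κ q) := by
    intro r q hq
    refine ⟨by rw [(hκ r).2.1, (hκ q).2.1], ?_, fun j hj hL => ?_, (hκ r).2.2 q hq⟩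
    · rw [(hκ r).2.1, (hκ q).2.1]
      exact hq.ne'
    · have h1 := hcon (κ r) (hκ r).1 (κ q) (hκ q).1 (fun h => hq.ne (hinj h))
        (by rw [(hκ r).2.1]) (by rw [(hκ q).2.1])
      have h2 : ({j, i} : Finset (Fin b)) ⊆
          univ.filter fun i' => (ω i' (κ q)).1 = (ω i' (κ r)).1 := by
        intro k hk
        rw [mem_insert, mem_singleton] at hk
        rw [mem_filter]
        refine ⟨mem_univ _, ?_⟩
        rcases hk with rfl | rfl
        · exact hL.symm
        · rw [(hκ r).2.1, (hκ q).2.1]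
      have h3 := card_le_card h2
      rw [card_pair hj] at h3
      unfold meet at h1
      omega
  refine hfree (univ.image κ) ?_ ⟨?_, ?_⟩
  · intro v hv
    obtain ⟨r, -, rfl⟩ := mem_image.1 hv
    exact (hκ r).1
  · intro v hv v' hv' hne
    obtain ⟨r, -, rfl⟩ := mem_image.1 (mem_coe.1 hv)
    obtain ⟨q, -, rfl⟩ := mem_image.1 (mem_coe.1 hv')
    rcases lt_trichotomy q r with h1 | h1 | h1
    · exact ⟨i, hedge r q h1⟩
    · exact absurd (by rw [h1]) hne
    · exact ⟨i, (hedge q r h1).symm⟩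
  · rw [card_image_of_injective _ hinj, card_univ, Fintype.card_fin]

/-- Every slope that is not bad provides `s * u` good bins, hence as many pairs in `W` collinear at
that slope and at another one; summed over the slopes these are counted by `excess`. -/
lemma card_not_bad_mul_le {V : Type*} [Fintype V] [DecidableEq V] {b N s u ℓ : ℕ}
    (ω : Fin b → V → Fin N × Fin s) (W : Finset V)
    (hfree : ∀ S ⊆ W, ¬ (graph ω).IsNClique s S)
    (hlow : ∀ i, LowDeg (Conflict ω i) W u)
    (h2 : ∀ x, ∑ y ∈ univ.erase x, excess ω x y ≤ ℓ) :
    (univ.filter fun i => ¬ BadAt W u i ω (ω i)).card * (s * u) ≤ W.card * ℓ := by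
  have hone : ∀ i, ¬ BadAt W u i ω (ω i) → s * u ≤ ∑ x ∈ W, ∑ y ∈ univ.erase x,
      if (ω i y).1 = (ω i x).1 ∧ 2 ≤ meet ω x y then 1 else 0 := by
    intro i hi
    have h3 : s * u ≤ (univ.filter fun a => GoodBin (Conflict ω i) W (ω i) a).card := by
      by_contra hlt
      exact hi ⟨hlow i, not_le.1 hlt⟩
    refine h3.trans ?_
    have hsub : (univ.filter fun a => GoodBin (Conflict ω i) W (ω i) a) ⊆
        W.biUnion fun x => ((univ.erase x).filter fun y =>
          (ω i y).1 = (ω i x).1 ∧ 2 ≤ meet ω x y).image fun _ => (ω i x).1 := by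
      intro a ha
      obtain ⟨x, hx, y, hy, hyx, hxa, hya, hm⟩ :=
        exists_meet_of_goodBin ω W hfree i a (mem_filter.1 ha).2
      rw [mem_biUnion]
      refine ⟨x, hx, mem_image.2 ⟨y, mem_filter.2 ⟨mem_erase.2 ⟨hyx, mem_univ _⟩, ?_, hm⟩, hxa⟩⟩
      rw [hxa, hya]
    refine (card_le_card hsub).trans (card_biUnion_le.trans (sum_le_sum fun x _ => ?_))
    refine card_image_le.trans ?_
    rw [card_filter]
  calc (univ.filter fun i => ¬ BadAt W u i ω (ω i)).card * (s * u)
      = ∑ i ∈ univ.filter fun i => ¬ BadAt W u i ω (ω i), s * u := by simp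
    _ ≤ ∑ i ∈ univ.filter fun i => ¬ BadAt W u i ω (ω i), ∑ x ∈ W, ∑ y ∈ univ.erase x,
          (if (ω i y).1 = (ω i x).1 ∧ 2 ≤ meet ω x y then 1 else 0) :=
        sum_le_sum fun i hi => hone i (mem_filter.1 hi).2
    _ ≤ ∑ i, ∑ x ∈ W, ∑ y ∈ univ.erase x,
          (if (ω i y).1 = (ω i x).1 ∧ 2 ≤ meet ω x y then 1 else 0) :=
        sum_le_sum_of_subset (filter_subset _ _)
    _ = ∑ x ∈ W, ∑ y ∈ univ.erase x, excess ω x y := by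
        rw [sum_comm]
        refine sum_congr rfl fun x _ => ?_
        rw [sum_comm]
        refine sum_congr rfl fun y _ => ?_
        unfold excess
        by_cases hm : 2 ≤ meet ω x y
        · simp only [hm, and_true, if_true]
          rw [← card_filter]
          rfl
        · simp [hm]
    _ ≤ ∑ x ∈ W, ℓ := sum_le_sum fun x _ => h2 x
    _ = _ := by simp

/-! ### Existence of a good configuration -/

/-- If the four exceptional events (an overfull line, a family of lines with too many incidences, a
vertex with too many repeated collinearities, a set `W` with at least `h` bad slopes) have
probability at most `1 / 5` each, some configuration avoids them all. A set `W` without `K_s` would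
have fewer than `h` bad slopes and at most `c` others, which is impossible as `h + c ≤ b`. -/
lemma exists_conf {n s N b u κ w M r τ ℓ h c : ℕ} {lam η η' p : ℝ} (hs : 0 < s) (hu : 0 < u)
    (hκ : 0 < κ) (hN : N = 2 * s * u) (hw : w = κ * (N * s)) (hMr : 2 * (s * w) = M * r)
    (h2r : 2 * r ≤ N) (hτ : 4 * (M * M * τ) ≤ u * (2 * (s * w)))
    (hc : 2 * (s * w) * ℓ ≤ c * (s * u)) (hb : h + c ≤ b)
    (hp : s * (2 ^ N * (κ ^ (s * u) * Real.exp (-(u * κ / 2)))) ≤ p)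
    (hlam : 0 ≤ lam) (hη : η = b * ((2 * r : ℕ) / N))
    (hsmall : η * Real.exp (2 * lam * b) ≤ 1 / 2)
    (hη' : η' = b * (1 / N)) (hsmall' : η' * Real.exp 3 ≤ 1 / 2)
    (q0 : b * N * Real.exp (n * (2 / N) - M) ≤ 1 / 5)
    (q1 : ((N : ℝ) ^ (2 * r)) ^ b *
      Real.exp (n * (2 * Real.exp (2 * lam) * η ^ 2) - lam * τ) ≤ 1 / 5)
    (q2 : n * Real.exp (n * (2 * Real.exp 6 * η' ^ 2) - 3 * ℓ) ≤ 1 / 5)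
    (q3 : (n : ℝ) ^ (2 * (s * w)) * (2 ^ b * p ^ h) ≤ 1 / 5) :
    ∃ ω : Fin b → Fin n → Fin N × Fin s, ∀ W : Finset (Fin n), W.card = 2 * (s * w) →
      ∃ S ⊆ W, (graph ω).IsNClique s S := by
  have hN0 : 0 < N := by rw [hN]; positivity
  have : Nonempty (Fin N × Fin s) := ⟨(⟨0, hN0⟩, ⟨0, hs⟩)⟩
  set C : ℝ := (Fintype.card (Fin b → Fin n → Fin N × Fin s) : ℝ) with hC
  have hC0 : 0 < C := by rw [hC]; exact_mod_cast Fintype.card_pos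
  set B0 : Finset (Fin b → Fin n → Fin N × Fin s) := univ.filter fun ω =>
    ∃ ja ∈ (univ : Finset (Fin b × Fin N)),
      M < (univ.filter fun x => (ω ja.1 x).1 = ja.2).card with hB0
  set B1 : Finset (Fin b → Fin n → Fin N × Fin s) := univ.filter fun ω =>
    ∃ A ∈ Fintype.piFinset fun _ : Fin b => powersetCard (2 * r) (univ : Finset (Fin N)),
      τ < ∑ z, hits ω A z * (hits ω A z - 1) with hB1
  set B2 : Finset (Fin b → Fin n → Fin N × Fin s) := univ.filter fun ω =>
    ∃ x ∈ (univ : Finset (Fin n)), ℓ < ∑ y ∈ univ.erase x, excess ω x y with hB2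
  set B3 : Finset (Fin b → Fin n → Fin N × Fin s) := univ.filter fun ω =>
    ∃ W ∈ powersetCard (2 * (s * w)) (univ : Finset (Fin n)),
      h ≤ (univ.filter fun i => BadAt W u i ω (ω i)).card with hB3
  have c0 : (B0.card : ℝ) ≤ C * (1 / 5) := by
    refine (card_le_of_exists B0 (univ : Finset (Fin b × Fin N)) _
      (C * Real.exp (n * (2 / N) - M)) (fun ω hω => (mem_filter.1 hω).2) fun ja _ => ?_).trans ?_
    · have := bad_line_count (V := Fin n) hN0 hs M ja.1 ja.2
      rwa [Fintype.card_fin] at this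
    rw [card_univ, Fintype.card_prod, Fintype.card_fin, Fintype.card_fin]
    push_cast
    calc (b : ℝ) * N * (C * Real.exp (n * (2 / N) - M))
        = C * (b * N * Real.exp (n * (2 / N) - M)) := by ring
      _ ≤ _ := by gcongr
  have c1 : (B1.card : ℝ) ≤ C * (1 / 5) := by
    refine (card_le_of_exists B1
      (Fintype.piFinset fun _ : Fin b => powersetCard (2 * r) (univ : Finset (Fin N)))
      (fun A ω => τ < ∑ z, hits ω A z * (hits ω A z - 1))
      (C * Real.exp (n * (2 * Real.exp (2 * lam) * η ^ 2) - lam * τ))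
      (fun ω hω => ((@mem_filter _ _ (_) _ _).1 hω).2) fun A hA => ?_).trans ?_
    · have := bad_family_count (V := Fin n) hN0 hs (2 * r) τ lam η hlam hη hsmall
        A fun j => (mem_powersetCard.1 (Fintype.mem_piFinset.1 hA j)).2
      rwa [Fintype.card_fin] at this
    rw [Fintype.card_piFinset, prod_const, card_powersetCard, card_univ, card_univ,
      Fintype.card_fin, Fintype.card_fin]
    have h1 : ((N.choose (2 * r) : ℕ) : ℝ) ≤ (N : ℝ) ^ (2 * r) := by
      exact_mod_cast Nat.choose_le_pow N (2 * r)
    push_cast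
    calc ((N.choose (2 * r) : ℕ) : ℝ) ^ b *
          (C * Real.exp (n * (2 * Real.exp (2 * lam) * η ^ 2) - lam * τ))
        ≤ ((N : ℝ) ^ (2 * r)) ^ b *
          (C * Real.exp (n * (2 * Real.exp (2 * lam) * η ^ 2) - lam * τ)) := by gcongr
      _ = C * (((N : ℝ) ^ (2 * r)) ^ b *
          Real.exp (n * (2 * Real.exp (2 * lam) * η ^ 2) - lam * τ)) := by ring
      _ ≤ _ := by gcongr
  have c2 : (B2.card : ℝ) ≤ C * (1 / 5) := by
    refine (card_le_of_exists B2 _ _ (C * Real.exp (n * (2 * Real.exp 6 * η' ^ 2) - 3 * ℓ))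
      (fun ω hω => (mem_filter.1 hω).2) fun x _ => ?_).trans ?_
    · have := bad_point_count (V := Fin n) hN0 hs ℓ η' hη' hsmall' x
      rw [Fintype.card_fin] at this
      exact this
    rw [card_univ, Fintype.card_fin]
    calc (n : ℝ) * (C * Real.exp (n * (2 * Real.exp 6 * η' ^ 2) - 3 * ℓ))
        = C * (n * Real.exp (n * (2 * Real.exp 6 * η' ^ 2) - 3 * ℓ)) := by ring
      _ ≤ _ := by gcongr
  have c3 : (B3.card : ℝ) ≤ C * (1 / 5) := by
    refine (card_le_of_exists B3 (powersetCard (2 * (s * w)) (univ : Finset (Fin n)))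
      (fun W ω => h ≤ (univ.filter fun i => BadAt W u i ω (ω i)).card) (C * (2 ^ b * p ^ h))
      (fun ω hω => ((@mem_filter _ _ (_) _ _).1 hω).2) fun W hW => ?_).trans ?_
    · exact card_many_bad_le hs hu hκ hN hw p hp W (mem_powersetCard.1 hW).2 h
    rw [card_powersetCard, card_univ, Fintype.card_fin]
    have h1 : ((n.choose (2 * (s * w)) : ℕ) : ℝ) ≤ (n : ℝ) ^ (2 * (s * w)) := by
      exact_mod_cast Nat.choose_le_pow n (2 * (s * w))
    have hp0 : 0 ≤ p := le_trans (by positivity) hp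
    calc ((n.choose (2 * (s * w)) : ℕ) : ℝ) * (C * (2 ^ b * p ^ h))
        ≤ (n : ℝ) ^ (2 * (s * w)) * (C * (2 ^ b * p ^ h)) := by gcongr
      _ = C * ((n : ℝ) ^ (2 * (s * w)) * (2 ^ b * p ^ h)) := by ring
      _ ≤ _ := by gcongr
  have hex : ∃ ω, ω ∉ B0 ∪ B1 ∪ B2 ∪ B3 := by
    by_contra hall
    push Not at hall
    have h1 : B0 ∪ B1 ∪ B2 ∪ B3 = univ := eq_univ_of_forall hall
    have h2 : Fintype.card (Fin b → Fin n → Fin N × Fin s) ≤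
        B0.card + B1.card + B2.card + B3.card := by
      rw [← card_univ, ← h1]
      refine (card_union_le _ _).trans (Nat.add_le_add_right ?_ _)
      refine (card_union_le _ _).trans (Nat.add_le_add_right ?_ _)
      exact card_union_le _ _
    have h3 : C ≤ B0.card + B1.card + B2.card + B3.card := by
      rw [hC]; exact_mod_cast h2
    linarith
  obtain ⟨ω, hω⟩ := hex
  simp only [mem_union, not_or, hB0, hB1, hB2, hB3, mem_filter, mem_univ, true_and, not_exists,
    not_and, not_lt, not_le, mem_powersetCard, Fintype.mem_piFinset, subset_univ] at hω
  obtain ⟨⟨⟨w0, w1⟩, w2⟩, w3⟩ := hω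
  refine ⟨ω, fun W hW => ?_⟩
  by_contra hno
  push Not at hno
  have hlow : ∀ i, LowDeg (Conflict ω i) W u := fun i =>
    lowDeg_of_sum _ W u _ hu
      (card_conflict_pairs_le ω W M r τ h2r (hW.trans hMr) (fun j a => w0 (j, a)) w1 i)
      (by rw [hW]; exact hτ)
  have h1 := card_not_bad_mul_le ω W hno hlow w2
  rw [hW] at h1
  have h2 := Nat.le_of_mul_le_mul_right (h1.trans hc) (by positivity)
  have h3 := w3 W hW
  have h4 := card_filter_add_card_filter_not (s := (univ : Finset (Fin b)))
    (fun i => BadAt W u i ω (ω i))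
  rw [card_univ, Fintype.card_fin] at h4
  omega

/-- A single `K_{s+1}`-free graph whose `t`-sets all contain a `K_s` bounds the function by `t`. -/
lemma erdosRogers_le {n s t : ℕ} (G : SimpleGraph (Fin n)) (hG : G.CliqueFree (s + 1))
    (h : ∀ W : Finset (Fin n), W.card = t → ∃ S ⊆ W, G.IsNClique s S) :
    erdosRogers s (s + 1) n ≤ t := by
  refine csSup_le' fun m hm => ?_
  obtain ⟨A, rfl, hA⟩ := hm G hG
  by_contra hlt
  obtain ⟨W, hWA, hW⟩ := exists_subset_card_eq (not_le.1 hlt).le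
  obtain ⟨S, hSW, hS⟩ := h W hW
  refine hA (S.subtype (· ∈ (A : Set (Fin n)))) ?_
  have hSA : ∀ x ∈ S, x ∈ (A : Set (Fin n)) := fun x hx => hWA (hSW hx)
  refine ⟨?_, ?_⟩
  · intro x hx y hy hxy
    exact hS.isClique (mem_subtype.1 hx) (mem_subtype.1 hy) fun h => hxy (Subtype.ext h)
  · rw [card_subtype, filter_true_of_mem hSA, hS.card_eq]

end

section

open Filter Asymptotics

/-! ### Numerical estimates -/

/-- The failure probability of one slope, for `κ = 2 ^ (6 s)` and `N = 2 s u`. -/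
lemma num_bad {s u : ℕ} (hs : 3 ≤ s) (hu : 0 < u) :
    (s : ℝ) * (2 ^ (2 * s * u) * (((2 ^ s) ^ 6 : ℕ) ^ (s * u) *
      Real.exp (-(u * ((2 ^ s) ^ 6 : ℕ) / 2)))) ≤ Real.exp (-(2 * u)) := by
  have hs' : (3 : ℝ) ≤ s := by exact_mod_cast hs
  have hu' : (1 : ℝ) ≤ u := by exact_mod_cast hu
  have e2 : (2 : ℝ) ≤ Real.exp 1 := by linarith [Real.add_one_le_exp (1 : ℝ)]
  have h1 : (s : ℝ) ≤ Real.exp (s * u) := by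
    have := Real.add_one_le_exp ((s : ℝ) * u)
    nlinarith
  have h2 : (2 : ℝ) ^ (2 * s * u) ≤ Real.exp (2 * s * u) := by
    calc (2 : ℝ) ^ (2 * s * u) ≤ Real.exp 1 ^ (2 * s * u) := by gcongr
      _ = _ := by rw [← Real.exp_nat_mul]; push_cast; ring_nf
  have h3 : ((((2 ^ s) ^ 6 : ℕ) : ℝ)) ^ (s * u) ≤ Real.exp (6 * s ^ 2 * u) := by
    push_cast
    calc (((2 : ℝ) ^ s) ^ 6) ^ (s * u) = 2 ^ (s * 6 * (s * u)) := by
          rw [← pow_mul, ← pow_mul, mul_assoc s 6]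
      _ ≤ Real.exp 1 ^ (s * 6 * (s * u)) := by gcongr
      _ = Real.exp (6 * s ^ 2 * u) := by rw [← Real.exp_nat_mul]; push_cast; ring_nf
  have hX : (s : ℝ) ≤ 2 ^ s := by exact_mod_cast s.lt_two_pow_self.le
  calc (s : ℝ) * (2 ^ (2 * s * u) * (((2 ^ s) ^ 6 : ℕ) ^ (s * u) *
      Real.exp (-(u * ((2 ^ s) ^ 6 : ℕ) / 2))))
      ≤ Real.exp (s * u) * (Real.exp (2 * s * u) * (Real.exp (6 * s ^ 2 * u) *
        Real.exp (-(u * ((2 ^ s) ^ 6 : ℕ) / 2)))) := by gcongr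
    _ = Real.exp (u * (3 * s + 6 * s ^ 2 - (2 ^ s) ^ 6 / 2)) := by
      rw [← Real.exp_add, ← Real.exp_add, ← Real.exp_add]; push_cast; ring_nf
    _ ≤ _ := by
      apply Real.exp_le_exp.2
      have h4 : ((3 : ℝ)) ^ 4 * s ^ 2 ≤ (2 ^ s) ^ 6 := by
        calc (3 : ℝ) ^ 4 * s ^ 2 ≤ (s : ℝ) ^ 4 * s ^ 2 := by gcongr
          _ = (s : ℝ) ^ 6 := by ring
          _ ≤ _ := by gcongr
      have h5 : (3 * s + 6 * s ^ 2 - (2 ^ s) ^ 6 / 2 : ℝ) ≤ -2 := by nlinarith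
      nlinarith

variable {S X l R n : ℝ}

lemma exp_neg_two : Real.exp (-2) ≤ 1 / 5 := by
  have h : (2.7 : ℝ) ≤ Real.exp 1 := by linarith [Real.exp_one_gt_d9]
  have h2 : (5 : ℝ) ≤ Real.exp 2 := by
    have : Real.exp 2 = Real.exp 1 * Real.exp 1 := by rw [← Real.exp_add]; norm_num
    rw [this]; nlinarith
  rw [Real.exp_neg, one_div]
  exact inv_anti₀ (by norm_num) h2

lemma num_line (hS : 3 ≤ S) (hX : 8 ≤ X) (hSX : S ≤ X) (hl : 1000 ≤ l) (hR : X ^ 100 * l ^ 2 ≤ R)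
    (hn : n ≤ R ^ 2 * l ^ 2) :
    2 * X ^ 11 * l * (2 * S * (X ^ 40 * R * l ^ 2)) *
      Real.exp (n * (2 / (2 * S * (X ^ 40 * R * l ^ 2))) - R) ≤ 1 / 5 := by
  have hR0 : 1 ≤ R := by
    have : (1 : ℝ) ≤ X ^ 100 * l ^ 2 := one_le_mul_of_one_le_of_one_le
      (one_le_pow₀ (by linarith)) (one_le_pow₀ (by linarith))
    linarith
  have hX40 : (1 : ℝ) ≤ X ^ 40 := one_le_pow₀ (by linarith)
  have h1 : n * (2 / (2 * S * (X ^ 40 * R * l ^ 2))) ≤ R / 2 := by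
    rw [mul_div_assoc', div_le_div_iff₀ (by positivity) (by norm_num)]
    have h3 : (2 : ℝ) ≤ S * X ^ 40 := by nlinarith
    have : 2 * (R ^ 2 * l ^ 2) ≤ S * X ^ 40 * (R ^ 2 * l ^ 2) := by gcongr
    nlinarith
  have h2 : 2 * X ^ 11 * l * (2 * S * (X ^ 40 * R * l ^ 2)) ≤ R ^ 3 := by
    calc 2 * X ^ 11 * l * (2 * S * (X ^ 40 * R * l ^ 2))
        ≤ X * X ^ 11 * l * (X * X * (X ^ 40 * R * l ^ 2)) := by gcongr <;> linarith
      _ = R * (X ^ 54 * l ^ 3) := by ring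
      _ ≤ R * (X ^ 200 * l ^ 4) := by gcongr <;> linarith
      _ = R * (X ^ 100 * l ^ 2) ^ 2 := by ring
      _ ≤ R * R ^ 2 := by gcongr
      _ = R ^ 3 := by ring
  have h4 := Real.pow_div_factorial_le_exp (R / 2) (by positivity) 4
  have h5 : (8 : ℝ) ^ 100 ≤ R := by
    refine le_trans ?_ hR
    calc (8 : ℝ) ^ 100 = 8 ^ 100 * 1 := by ring
      _ ≤ X ^ 100 * l ^ 2 := by gcongr; exact one_le_pow₀ (by linarith)
  have h6 : 5 * R ^ 3 ≤ Real.exp (R / 2) := by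
    refine le_trans ?_ h4
    norm_num [Nat.factorial] at h5 ⊢
    have : 1920 * R ^ 3 ≤ R * R ^ 3 := by gcongr; linarith
    nlinarith
  calc _ ≤ R ^ 3 * Real.exp (R / 2 - R) := by gcongr
    _ = R ^ 3 / Real.exp (R / 2) := by
      rw [div_eq_mul_inv (R ^ 3), ← Real.exp_neg]; ring_nf
    _ ≤ 1 / 5 := by
      rw [div_le_div_iff₀ (Real.exp_pos _) (by norm_num)]; linarith

lemma eta_eq (hS : 3 ≤ S) (hX : 8 ≤ X) (hl : 1000 ≤ l) (hR : 0 < R) :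
    2 * X ^ 11 * l * (2 * (4 * S ^ 3 * X ^ 6 * X ^ 40 * l ^ 2) / (2 * S * (X ^ 40 * R * l ^ 2)))
      = 8 * S ^ 2 * X ^ 17 * l / R := by
  field_simp
  ring

lemma num_small (hS : 3 ≤ S) (hX : 8 ≤ X) (hSX : S ≤ X) (hl : 1000 ≤ l)
    (hR : X ^ 100 * l ^ 2 * Real.exp (l / 8) ≤ R) :
    8 * S ^ 2 * X ^ 17 * l / R * Real.exp (l / 8) ≤ 1 / 2 := by
  have hR0 : 0 < R := lt_of_lt_of_le (by positivity) hR
  rw [div_mul_eq_mul_div, div_le_div_iff₀ hR0 (by norm_num)]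
  calc 8 * S ^ 2 * X ^ 17 * l * Real.exp (l / 8) * 2
      = 8 * S ^ 2 * X ^ 17 * l * 2 * Real.exp (l / 8) := by ring
    _ ≤ X * X ^ 2 * X ^ 17 * l * l * Real.exp (l / 8) := by gcongr; linarith
    _ = X ^ 20 * l ^ 2 * Real.exp (l / 8) := by ring
    _ ≤ X ^ 100 * l ^ 2 * Real.exp (l / 8) := by gcongr <;> linarith
    _ ≤ _ := by linarith

lemma eta'_le (hS : 3 ≤ S) (hX : 8 ≤ X) (hl : 1000 ≤ l) (hR : 0 < R) :
    2 * X ^ 11 * l * (1 / (2 * S * (X ^ 40 * R * l ^ 2))) ≤ 1 / (R * l) := by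
  rw [mul_one_div, div_le_div_iff₀ (by positivity) (by positivity)]
  calc 2 * X ^ 11 * l * (R * l) = 2 * 1 * (X ^ 11 * R * l ^ 2) := by ring
    _ ≤ 2 * S * (X ^ 40 * R * l ^ 2) := by gcongr <;> linarith
    _ = _ := by ring

lemma num_small' {e : ℝ} (hl : 1000 ≤ l) (hR : 1 ≤ R) (he : e ≤ 1 / (R * l)) :
    e * Real.exp 3 ≤ 1 / 2 := by
  have h1 : Real.exp 3 ≤ 27 := by
    have : Real.exp 3 = Real.exp 1 ^ 3 := by rw [← Real.exp_nat_mul]; norm_num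
    rw [this]
    calc Real.exp 1 ^ 3 ≤ 3 ^ 3 := by gcongr; linarith [Real.exp_one_lt_d9]
      _ = 27 := by norm_num
  have h2 : e ≤ 1 / 1000 := he.trans (one_div_le_one_div_of_le (by norm_num) (by nlinarith))
  have := Real.exp_pos 3
  nlinarith

lemma num_family {lam η : ℝ} {N m : ℝ} {k : ℕ} (hS : 3 ≤ S) (hX : 8 ≤ X) (hSX : S ≤ X)
    (hl : 1000 ≤ l) (hR : X ^ 100 * l ^ 2 ≤ R) (hn0 : 0 ≤ n)
    (hn : n ≤ R ^ 2 * l ^ 2) (hRl : R ≤ Real.exp l) (hη : η = 8 * S ^ 2 * X ^ 17 * l / R)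
    (hlam : lam = 1 / (32 * X ^ 11)) (hN : N = 2 * S * (X ^ 40 * R * l ^ 2))
    (hk : (k : ℝ) = 2 * (4 * S ^ 3 * X ^ 6 * X ^ 40 * l ^ 2) * (2 * X ^ 11 * l))
    (hm : m = S ^ 3 * X ^ 86 * l ^ 4) :
    N ^ k * Real.exp (n * (2 * Real.exp (2 * lam) * η ^ 2) - lam * m) ≤ 1 / 5 := by
  have hR0 : 1 ≤ R := by
    have : (1 : ℝ) ≤ X ^ 100 * l ^ 2 := one_le_mul_of_one_le_of_one_le
      (one_le_pow₀ (by linarith)) (one_le_pow₀ (by linarith))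
    linarith
  have hN0 : 0 ≤ N := by rw [hN]; positivity
  have hN1 : N ≤ Real.exp (2 * l) := by
    calc N ≤ X * X * (X ^ 40 * R * l ^ 2) := by rw [hN]; gcongr; linarith
      _ = R * (X ^ 42 * l ^ 2) := by ring
      _ ≤ R * (X ^ 100 * l ^ 2) := by gcongr <;> linarith
      _ ≤ R * R := by gcongr
      _ ≤ Real.exp l * Real.exp l := by gcongr
      _ = _ := by rw [← Real.exp_add]; ring_nf
  have hX11 : (8 : ℝ) ≤ X ^ 11 := by
    calc (8 : ℝ) ≤ X := hX
      _ = X ^ 1 := by ring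
      _ ≤ X ^ 11 := by gcongr <;> linarith
  have he : Real.exp (2 * lam) ≤ 3 := by
    calc Real.exp (2 * lam) ≤ Real.exp 1 := by
          apply Real.exp_le_exp.2
          rw [hlam, mul_one_div, div_le_one (by positivity)]; linarith
      _ ≤ 3 := by linarith [Real.exp_one_lt_d9]
  have h1 : n * (2 * Real.exp (2 * lam) * η ^ 2) ≤ 384 * S ^ 4 * X ^ 34 * l ^ 4 := by
    calc n * (2 * Real.exp (2 * lam) * η ^ 2) ≤ R ^ 2 * l ^ 2 * (2 * 3 * η ^ 2) := by gcongr
      _ = _ := by rw [hη]; field_simp; ring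
  have h2 : lam * m = S ^ 3 * X ^ 75 * l ^ 4 / 32 := by rw [hlam, hm]; field_simp
  have hl4 : (1 : ℝ) ≤ l ^ 4 := one_le_pow₀ (by linarith)
  have hS3 : (1 : ℝ) ≤ S ^ 3 := one_le_pow₀ (by linarith)
  have hX57 : (1 : ℝ) ≤ X ^ 57 := one_le_pow₀ (by linarith)
  calc N ^ k * Real.exp (n * (2 * Real.exp (2 * lam) * η ^ 2) - lam * m)
      ≤ Real.exp (2 * l) ^ k * Real.exp (384 * S ^ 4 * X ^ 34 * l ^ 4
          - S ^ 3 * X ^ 75 * l ^ 4 / 32) := by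
        rw [h2]; gcongr
    _ = Real.exp (S ^ 3 * l ^ 4 * (32 * X ^ 57 + 384 * S * X ^ 34 - X ^ 75 / 32)) := by
      rw [← Real.exp_nat_mul, ← Real.exp_add, hk]; ring_nf
    _ ≤ Real.exp (-2) := by
      apply Real.exp_le_exp.2
      have a1 : S * X ^ 34 ≤ X ^ 57 := by
        calc S * X ^ 34 ≤ X * X ^ 34 := by gcongr
          _ = X ^ 35 := by ring
          _ ≤ X ^ 57 := by gcongr <;> linarith
      have a2 : 8 ^ 18 * X ^ 57 ≤ X ^ 75 := by
        calc 8 ^ 18 * X ^ 57 ≤ X ^ 18 * X ^ 57 := by gcongr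
          _ = X ^ 75 := by ring
      have a3 : 32 * X ^ 57 + 384 * S * X ^ 34 - X ^ 75 / 32 ≤ -2 := by nlinarith
      have a4 : 1 ≤ S ^ 3 * l ^ 4 := one_le_mul_of_one_le_of_one_le hS3 hl4
      nlinarith
    _ ≤ 1 / 5 := exp_neg_two

lemma num_point {e : ℝ} (hl : 1000 ≤ l) (hR : 1 ≤ R) (he0 : 0 ≤ e) (he : e ≤ 1 / (R * l))
    (hn0 : 0 ≤ n) (hn : n ≤ R ^ 2 * l ^ 2) (hn' : n ≤ Real.exp l) :
    n * Real.exp (n * (2 * Real.exp 6 * e ^ 2) - 3 * l) ≤ 1 / 5 := by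
  have h1 : Real.exp 6 ≤ 729 := by
    have : Real.exp 6 = Real.exp 1 ^ 6 := by rw [← Real.exp_nat_mul]; norm_num
    rw [this]
    calc Real.exp 1 ^ 6 ≤ 3 ^ 6 := by gcongr; linarith [Real.exp_one_lt_d9]
      _ = 729 := by norm_num
  have h2 : n * (2 * Real.exp 6 * e ^ 2) ≤ 1458 := by
    calc n * (2 * Real.exp 6 * e ^ 2)
        ≤ R ^ 2 * l ^ 2 * (2 * 729 * (1 / (R * l)) ^ 2) := by gcongr
      _ = 1458 := by field_simp; norm_num
  calc _ ≤ Real.exp l * Real.exp (1458 - 3 * l) := by gcongr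
    _ = Real.exp (1458 - 2 * l) := by rw [← Real.exp_add]; ring_nf
    _ ≤ Real.exp (-2) := by gcongr; linarith
    _ ≤ 1 / 5 := exp_neg_two

lemma num_sets {t b h : ℕ} {u : ℝ} (hS : 3 ≤ S) (hX : 8 ≤ X) (hSX : S ≤ X)
    (hl : 1000 ≤ l) (hu : 4 ≤ u) (hn0 : 0 ≤ n) (hn' : n ≤ Real.exp l)
    (ht : (t : ℝ) = 4 * S ^ 3 * X ^ 6 * u) (hb : (b : ℝ) = 2 * X ^ 11 * l)
    (hh : (h : ℝ) = X ^ 11 * l) :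
    n ^ t * (2 ^ b * Real.exp (-(2 * u)) ^ h) ≤ 1 / 5 := by
  have e2 : (2 : ℝ) ≤ Real.exp 1 := by linarith [Real.add_one_le_exp (1 : ℝ)]
  calc n ^ t * (2 ^ b * Real.exp (-(2 * u)) ^ h)
      ≤ Real.exp l ^ t * (Real.exp 1 ^ b * Real.exp (-(2 * u)) ^ h) := by gcongr
    _ = Real.exp (4 * S ^ 3 * X ^ 6 * u * l + 2 * X ^ 11 * l - 2 * u * (X ^ 11 * l)) := by
      rw [← Real.exp_nat_mul, ← Real.exp_nat_mul, ← Real.exp_nat_mul, ← Real.exp_add,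
        ← Real.exp_add, ht, hb, hh]
      ring_nf
    _ ≤ Real.exp (-2) := by
      apply Real.exp_le_exp.2
      have a1 : 8 * (S ^ 3 * X ^ 6) ≤ X ^ 11 := by
        calc 8 * (S ^ 3 * X ^ 6) ≤ X * (X ^ 3 * X ^ 6) := by gcongr
          _ = X ^ 10 := by ring
          _ ≤ X ^ 11 := by gcongr <;> linarith
      have a2 : 1 ≤ X ^ 11 * l := one_le_mul_of_one_le_of_one_le
        (one_le_pow₀ (by linarith)) (by linarith)
      have a3 : 8 * (S ^ 3 * X ^ 6) * (u * l) ≤ X ^ 11 * (u * l) := by gcongr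
      have a4 : 4 * (X ^ 11 * l) ≤ u * (X ^ 11 * l) := by gcongr
      nlinarith
    _ ≤ 1 / 5 := exp_neg_two

/-! ### Choice of parameters -/

/-- The integers are `l = ⌈log n⌉` and `R = ⌈√n / l⌉`; then `R` exceeds any fixed multiple of
`l ^ 2 * exp (l / 8)`, since it is of order `exp (l / 2) / l`. -/
lemma eventually_params (K : ℝ) : ∀ᶠ n : ℕ in atTop, ∃ l R : ℕ, (1000 : ℝ) ≤ l ∧
    K * l ^ 2 * Real.exp (l / 8) ≤ R ∧ (n : ℝ) ≤ R ^ 2 * l ^ 2 ∧ (n : ℝ) ≤ Real.exp l ∧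
    (R : ℝ) ≤ Real.exp l ∧ (R : ℝ) * l ≤ 2 * Real.sqrt n ∧ (l : ℝ) ≤ 2 * Real.log n := by
  have hlog : Tendsto (fun n : ℕ => Real.log n) atTop atTop :=
    Real.tendsto_log_atTop.comp tendsto_natCast_atTop_atTop
  have hl : Tendsto (fun n : ℕ => (⌈Real.log n⌉₊ : ℝ)) atTop atTop :=
    tendsto_atTop_mono (fun n => Nat.le_ceil _) hlog
  have hgrow : ∀ᶠ x : ℝ in atTop, 2 * |K| * x ^ 3 ≤ Real.exp (3 / 8 * x) := by
    have h := (isLittleO_pow_exp_pos_mul_atTop 3 (b := 3 / 8) (by norm_num)).def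
      (c := 1 / (2 * (|K| + 1))) (by positivity)
    filter_upwards [h, eventually_ge_atTop 0] with x hx hx0
    rw [Real.norm_of_nonneg (by positivity), Real.norm_of_nonneg (by positivity),
      div_mul_eq_mul_div, one_mul, le_div_iff₀ (by positivity)] at hx
    have : 0 ≤ x ^ 3 := by positivity
    nlinarith
  filter_upwards [hl.eventually hgrow, hl.eventually_ge_atTop 1000,
    eventually_ge_atTop 1] with n h1 h2 h3
  set l := ⌈Real.log n⌉₊ with hldef
  have hn : (1 : ℝ) ≤ n := by exact_mod_cast h3
  have hl0 : (0 : ℝ) < l := by linarith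
  have hlog0 : 0 ≤ Real.log n := Real.log_nonneg hn
  have hl1 : (l : ℝ) ≤ Real.log n + 1 := (Nat.ceil_lt_add_one hlog0).le
  have hnl : (n : ℝ) ≤ Real.exp l := by
    rw [← Real.log_le_iff_le_exp (by linarith)]; exact Nat.le_ceil _
  set R := ⌈Real.sqrt n / l⌉₊ with hR
  have hR1 : Real.sqrt n ≤ R * l := (div_le_iff₀ hl0).1 (Nat.le_ceil _)
  have hexp : Real.exp ((l - 1) / 2) ≤ Real.sqrt n := by
    apply Real.le_sqrt_of_sq_le
    rw [← Real.exp_nat_mul, ← Real.le_log_iff_exp_le (by linarith)]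
    push_cast; linarith
  have e12 : Real.exp (1 / 2) ≤ 2 := by
    have h := Real.exp_one_lt_d9
    have : Real.exp (1 / 2) * Real.exp (1 / 2) = Real.exp 1 := by rw [← Real.exp_add]; norm_num
    nlinarith [Real.exp_pos (1 / 2)]
  have hbig : |K| * l ^ 3 * Real.exp (l / 8) ≤ Real.sqrt n := by
    refine le_trans ?_ hexp
    have a1 : Real.exp ((l - 1) / 2) * Real.exp (1 / 2) =
        Real.exp (3 / 8 * l) * Real.exp (l / 8) := by
      rw [← Real.exp_add, ← Real.exp_add]; ring_nf
    have a2 : 2 * |K| * l ^ 3 * Real.exp (l / 8) ≤ Real.exp (3 / 8 * l) * Real.exp (l / 8) := by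
      gcongr
    rw [← a1] at a2
    have a3 := mul_le_mul_of_nonneg_left e12 (Real.exp_pos (((l : ℝ) - 1) / 2)).le
    linarith
  have hlsq : (l : ℝ) ≤ Real.sqrt n := by
    refine le_trans ?_ hexp
    have h := Real.quadratic_le_exp_of_nonneg (x := ((l : ℝ) - 1) / 2) (by linarith)
    nlinarith
  have hRl : (R : ℝ) * l ≤ 2 * Real.sqrt n := by
    have := (Nat.ceil_lt_add_one (a := Real.sqrt n / l) (by positivity)).le
    rw [← hR] at this
    calc (R : ℝ) * l ≤ (Real.sqrt n / l + 1) * l := by gcongr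
      _ = Real.sqrt n + l := by field_simp
      _ ≤ _ := by linarith
  refine ⟨l, R, h2, ?_, ?_, hnl, ?_, hRl, by linarith⟩
  · have : |K| * l ^ 2 * Real.exp (l / 8) * l ≤ R * l := by
      calc _ = |K| * l ^ 3 * Real.exp (l / 8) := by ring
        _ ≤ _ := hbig.trans hR1
    refine le_trans ?_ (le_of_mul_le_mul_right this hl0)
    gcongr
    exact le_abs_self K
  · calc (n : ℝ) = Real.sqrt n ^ 2 := (Real.sq_sqrt (by linarith)).symm
      _ ≤ (R * l) ^ 2 := by gcongr
      _ = _ := by ring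
  · refine le_trans ?_ hnl
    have : Real.sqrt n * Real.sqrt n = n := Real.mul_self_sqrt (by linarith)
    have : 0 ≤ Real.sqrt n := Real.sqrt_nonneg _
    have : (0 : ℝ) ≤ R := by positivity
    nlinarith

/-- The existence theorem with explicit parameters, expressed through `X = 2 ^ s`. -/
lemma main_bound {s n l R : ℕ} (hs : 3 ≤ s) (hl : (1000 : ℝ) ≤ l)
    (hR : (2 ^ s) ^ 100 * l ^ 2 * Real.exp (l / 8) ≤ R) (hn : (n : ℝ) ≤ R ^ 2 * l ^ 2)
    (hn' : (n : ℝ) ≤ Real.exp l) (hRl : (R : ℝ) ≤ Real.exp l) :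
    erdosRogers s (s + 1) n ≤ 4 * s ^ 3 * (2 ^ s) ^ 46 * R * l ^ 2 := by
  obtain ⟨X, hX⟩ : ∃ X : ℕ, X = 2 ^ s := ⟨_, rfl⟩
  have hXr : (2 : ℝ) ^ s = X := by rw [hX]; push_cast; rfl
  rw [hXr] at hR
  rw [← hX]
  have hX8 : 8 ≤ X := by
    rw [hX]; calc 8 = 2 ^ 3 := by norm_num
      _ ≤ 2 ^ s := Nat.pow_le_pow_right (by norm_num) hs
  have hsX : s ≤ X := hX ▸ s.lt_two_pow_self.le
  have hS' : (3 : ℝ) ≤ s := by exact_mod_cast hs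
  have hX' : (8 : ℝ) ≤ X := by exact_mod_cast hX8
  have hSX' : (s : ℝ) ≤ X := by exact_mod_cast hsX
  have hl' : 1000 ≤ l := by exact_mod_cast hl
  have hR2 : (X : ℝ) ^ 100 * l ^ 2 ≤ R := by
    refine le_trans (le_mul_of_one_le_right (by positivity) ?_) hR
    exact Real.one_le_exp (by positivity)
  have hR2n : X ^ 100 * l ^ 2 ≤ R := by exact_mod_cast hR2
  have hR0 : 0 < R := lt_of_lt_of_le (by positivity) hR2n
  have hR1 : (1 : ℝ) ≤ R := by exact_mod_cast hR0
  have hu4 : (4 : ℝ) ≤ ((X ^ 40 * R * l ^ 2 : ℕ) : ℝ) := by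
    have h1 : 1 ≤ X ^ 40 * R * l := Nat.succ_le_of_lt (by positivity)
    have h2 : 1 * 4 ≤ X ^ 40 * R * l * l := Nat.mul_le_mul h1 (by omega)
    have : 4 ≤ X ^ 40 * R * l ^ 2 := by
      linarith [show X ^ 40 * R * l ^ 2 = X ^ 40 * R * l * l by ring]
    exact_mod_cast this
  have hX11 : 4 * s ^ 2 * X ^ 6 ≤ X ^ 11 := by
    calc 4 * s ^ 2 * X ^ 6 ≤ X * X ^ 2 * X ^ 6 := by gcongr; omega
      _ = X ^ 9 := by ring
      _ ≤ X ^ 11 := Nat.pow_le_pow_right (by omega) (by norm_num)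
  have key := exists_conf (n := n) (s := s) (N := 2 * s * (X ^ 40 * R * l ^ 2))
    (b := 2 * X ^ 11 * l)
    (u := X ^ 40 * R * l ^ 2) (κ := X ^ 6) (w := X ^ 6 * (2 * s * (X ^ 40 * R * l ^ 2) * s))
    (M := R) (r := 4 * s ^ 3 * X ^ 6 * X ^ 40 * l ^ 2) (τ := s ^ 3 * X ^ 86 * l ^ 4) (ℓ := l)
    (h := X ^ 11 * l) (c := 4 * s ^ 2 * X ^ 6 * l) (lam := 1 / (32 * X ^ 11))
    (η := 8 * s ^ 2 * X ^ 17 * l / R)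
    (η' := 2 * X ^ 11 * l * (1 / (2 * s * (X ^ 40 * R * l ^ 2))))
    (p := Real.exp (-(2 * (X ^ 40 * R * l ^ 2 : ℕ))))
    (by omega) (by positivity) (by positivity) rfl rfl (by ring)
    (by
      calc 2 * (4 * s ^ 3 * X ^ 6 * X ^ 40 * l ^ 2)
          = (4 * s ^ 2 * X ^ 6) * (2 * s * (X ^ 40 * 1 * l ^ 2)) := by ring
        _ ≤ X ^ 11 * (2 * s * (X ^ 40 * 1 * l ^ 2)) := by gcongr
        _ ≤ X ^ 100 * (2 * s * (X ^ 40 * 1 * l ^ 2)) := by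
          gcongr <;> omega
        _ = 2 * s * (X ^ 40 * (X ^ 100 * 1) * l ^ 2) := by ring
        _ ≤ 2 * s * (X ^ 40 * (X ^ 100 * l ^ 2) * l ^ 2) := by
          gcongr; exact Nat.succ_le_of_lt (by positivity)
        _ ≤ 2 * s * (X ^ 40 * R * l ^ 2) := by gcongr)
    (le_of_eq (by ring)) (le_of_eq (by ring))
    (by
      calc X ^ 11 * l + 4 * s ^ 2 * X ^ 6 * l ≤ X ^ 11 * l + X ^ 11 * l := by gcongr
        _ = _ := by ring)
    (by
      have := num_bad (u := X ^ 40 * R * l ^ 2) hs (by positivity)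
      rw [← hX] at this
      exact this)
    (by positivity)
    (by
      push_cast
      exact (eta_eq hS' hX' hl (by positivity)).symm)
    (by
      have h : (2 : ℝ) * (1 / (32 * X ^ 11)) * ((2 * X ^ 11 * l : ℕ) : ℝ) = l / 8 := by
        push_cast; field_simp; norm_num
      rw [h]
      exact num_small hS' hX' hSX' hl hR)
    (by push_cast; rfl)
    (num_small' hl hR1 (eta'_le hS' hX' hl (by positivity)))
    (by
      push_cast
      exact num_line hS' hX' hSX' hl hR2 hn)
    (by
      rw [← pow_mul]
      exact num_family hS' hX' hSX' hl hR2 (by positivity) hn hRl rfl rfl (by push_cast; rfl)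
        (by push_cast; ring) (by push_cast; ring))
    (num_point hl hR1 (by positivity) (eta'_le hS' hX' hl (by positivity)) (by positivity) hn hn')
    (num_sets hS' hX' hSX' hl hu4 (by positivity) hn' (by push_cast; ring) (by push_cast; ring)
      (by push_cast; ring))
  obtain ⟨ω, hω⟩ := key
  have ht : 2 * (s * (X ^ 6 * (2 * s * (X ^ 40 * R * l ^ 2) * s))) =
      4 * s ^ 3 * X ^ 46 * R * l ^ 2 := by ring
  rw [ht] at hω
  exact erdosRogers_le (graph ω) (graph_cliqueFree (by omega) ω) hω

end

end ER

/-- For every `s ≥ 3` there is `n₀` such that for all `n ≥ n₀`,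
`f_{s,s+1}(n) ≤ 2^{100s}·√n·log n`. -/
theorem erdosRogers_upper (s : ℕ) (hs : 3 ≤ s) :
    ∃ n₀ : ℕ, ∀ n : ℕ, n₀ ≤ n →
      (erdosRogers s (s + 1) n : ℝ) ≤ 2 ^ (100 * s) * Real.sqrt n * Real.log n := by
  obtain ⟨n₀, hn₀⟩ := Filter.eventually_atTop.1 (ER.eventually_params ((2 ^ s) ^ 100))
  refine ⟨n₀, fun n hn => ?_⟩
  obtain ⟨l, R, hl, hR, hnR, hnl, hRl, hRs, hll⟩ := hn₀ n hn
  have h1 : (erdosRogers s (s + 1) n : ℝ) ≤ 4 * s ^ 3 * (2 ^ s) ^ 46 * R * l ^ 2 := by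
    exact_mod_cast ER.main_bound hs hl hR hnR hnl hRl
  have hlog : 0 ≤ Real.log n := by linarith
  have hsX : (s : ℝ) ≤ 2 ^ s := by exact_mod_cast s.lt_two_pow_self.le
  have h8 : (8 : ℝ) ≤ 2 ^ s := by
    calc (8 : ℝ) = 2 ^ 3 := by norm_num
      _ ≤ 2 ^ s := pow_le_pow_right₀ (by norm_num) hs
  calc (erdosRogers s (s + 1) n : ℝ) ≤ 4 * s ^ 3 * (2 ^ s) ^ 46 * R * l ^ 2 := h1
    _ = 4 * s ^ 3 * (2 ^ s) ^ 46 * (R * l * l) := by ring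
    _ ≤ 4 * s ^ 3 * (2 ^ s) ^ 46 * (2 * Real.sqrt n * (2 * Real.log n)) := by gcongr
    _ = 2 * 8 * s ^ 3 * (2 ^ s) ^ 46 * (Real.sqrt n * Real.log n) := by ring
    _ ≤ 2 ^ s * 2 ^ s * (2 ^ s) ^ 3 * (2 ^ s) ^ 46 * (Real.sqrt n * Real.log n) := by
      gcongr; linarith
    _ = (2 ^ s) ^ 51 * (Real.sqrt n * Real.log n) := by ring
    _ ≤ (2 ^ s) ^ 100 * (Real.sqrt n * Real.log n) := by
      gcongr <;> linarith
    _ = _ := by rw [← pow_mul, mul_comm s]; ring
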